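/- Let G be an ample groupoid with compact unit space and let 𝒞 = (G_0,…,G_d) be a colouring of G with nerve N_*. Then the canonical inclusion N_*^> → N_* induces an isomorphism H_*(𝒞) ≅ H_*^G(N_*^>); in particular, since N_n^> is empty for n > d, H_n(𝒞) = 0 for all n > d. -/

import Mathlib

noncomputable section

open Function Set

attribute [local instance] Classical.propDecidable

universe u v w

/-- `ℤ[Y]`: the set of compactly supported continuous `ℤ`-valued functions on a space `Y`
(`ℤ` carries the discrete topology). -/
def ccZ (Y : Type v) [TopologicalSpace Y] : Set (Y → ℤ) :=
  {f | Continuous f ∧ HasCompactSupport f}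

/-- `ℤ[Y]` as an additive subgroup of the group of all functions `Y → ℤ`. -/
def ccZSub (Y : Type v) [TopologicalSpace Y] : AddSubgroup (Y → ℤ) where
  carrier := ccZ Y
  add_mem' {a b} ha hb := ⟨ha.1.add hb.1, ha.2.add hb.2⟩
  zero_mem' := ⟨continuous_const, by
    have h : tsupport (0 : Y → ℤ) = ∅ := by simp [tsupport]
    unfold HasCompactSupport
    rw [h]; exact isCompact_empty⟩
  neg_mem' {a} ha := ⟨ha.1.neg, ha.2.neg⟩

@[simp] lemma mem_ccZSub {Y : Type v} [TopologicalSpace Y] (f : Y → ℤ) :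
    f ∈ ccZSub Y ↔ f ∈ ccZ Y := Iff.rfl

/-- The pushforward `φ_*(a)(y) = ∑_{x ∈ φ⁻¹(y)} a x` of a function along a map. -/
def pushf {X : Type v} {Y : Type w} (φ : X → Y) (a : X → ℤ) : Y → ℤ :=
  fun y => ∑ᶠ x ∈ φ ⁻¹' {y}, a x

/-- The generated equivalence relation. -/
inductive RelGen {α : Sort*} (r : α → α → Prop) : α → α → Prop
  | rel {x y} : r x y → RelGen r x y
  | refl (x) : RelGen r x x
  | symm {x y} : RelGen r x y → RelGen r y x
  | trans {x y z} : RelGen r x y → RelGen r y z → RelGen r x z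

/-- The purely algebraic data of a topological groupoid, with arrow space `G`:
the set of units, source and range maps (valued in units), a (junk-total)
partially defined composition, and inversion. -/
structure GroupoidData (G : Type u) where
  unitSpace : Set G
  source : G → G
  range : G → G
  mul : G → G → G
  inv : G → G

namespace GroupoidData

variable {G : Type u} (D : GroupoidData G)

/-- The product of two subsets of a groupoid. -/
def setMul (A B : Set G) : Set G :=
  {w | ∃ a ∈ A, ∃ b ∈ B, D.source a = D.range b ∧ w = D.mul a b}

/-- A bisection: a subset on which both the source and the range map are injective. -/
def IsBisection (B : Set G) : Prop := Set.InjOn D.source B ∧ Set.InjOn D.range B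

/-- Membership in the subgroupoid generated by a subset `A` of `G`. -/
inductive InSubgroupoid (A : Set G) : G → Prop
  | base {g} : g ∈ A → InSubgroupoid A g
  | inv {g} : InSubgroupoid A g → InSubgroupoid A (D.inv g)
  | mul {g h} : InSubgroupoid A g → InSubgroupoid A h → D.source g = D.range h →
      InSubgroupoid A (D.mul g h)

/-- `G` is a (locally compact, Hausdorff, étale) ample groupoid: all the algebraic groupoid
axioms hold, the structure maps are suitably continuous, the source and range maps are local
homeomorphisms onto the open unit space (étaleness), and the compact open bisections form a
basis for the topology (ampleness). -/
structure IsAmpleGroupoid [TopologicalSpace G] : Prop where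
  t2 : T2Space G
  locallyCompact : LocallyCompactSpace G
  source_mem : ∀ g, D.source g ∈ D.unitSpace
  range_mem : ∀ g, D.range g ∈ D.unitSpace
  source_unit : ∀ x ∈ D.unitSpace, D.source x = x
  range_unit : ∀ x ∈ D.unitSpace, D.range x = x
  source_mul : ∀ g h, D.source g = D.range h → D.source (D.mul g h) = D.source h
  range_mul : ∀ g h, D.source g = D.range h → D.range (D.mul g h) = D.range g
  mul_assoc : ∀ g h k, D.source g = D.range h → D.source h = D.range k →
      D.mul (D.mul g h) k = D.mul g (D.mul h k)
  source_inv : ∀ g, D.source (D.inv g) = D.range g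
  range_inv : ∀ g, D.range (D.inv g) = D.source g
  inv_mul : ∀ g, D.mul (D.inv g) g = D.source g
  mul_inv : ∀ g, D.mul g (D.inv g) = D.range g
  unit_mul : ∀ g, D.mul (D.range g) g = g
  mul_unit : ∀ g, D.mul g (D.source g) = g
  continuous_inv : Continuous D.inv
  continuous_mul : Continuous fun p : {p : G × G // D.source p.1 = D.range p.2} =>
      D.mul p.1.1 p.1.2
  open_unitSpace : IsOpen D.unitSpace
  etale_source : IsLocalHomeomorph D.source
  etale_range : IsLocalHomeomorph D.range
  ample : ∀ g : G, ∀ U : Set G, IsOpen U → g ∈ U →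
      ∃ B : Set G, g ∈ B ∧ B ⊆ U ∧ IsOpen B ∧ IsCompact B ∧ D.IsBisection B

/-- A groupoid is principal if every arrow with equal range and source is a unit. -/
def IsPrincipal : Prop := ∀ g, D.source g = D.range g → g ∈ D.unitSpace

/-- `G` has dynamic asymptotic dimension at most `d`: for every relatively compact open
subset `K` of `G` there are `d+1` open subsets of the unit space covering `r(K) ∪ s(K)` such
that the subgroupoid generated by the elements of `K` with source and range in one of these
sets is relatively compact. -/
def DadLE [TopologicalSpace G] (d : ℕ) : Prop :=
  ∀ K : Set G, IsOpen K → IsCompact (closure K) →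
    ∃ U : Fin (d + 1) → Set G,
      (∀ i, IsOpen (U i) ∧ U i ⊆ D.unitSpace) ∧
      (D.range '' K ∪ D.source '' K ⊆ ⋃ i, U i) ∧
      ∀ i, IsCompact (closure
        {g | D.InSubgroupoid {g ∈ K | D.source g ∈ U i ∧ D.range g ∈ U i} g})

/-! ### Matui's complex computing the Crainic–Moerdijk groupoid homology `H_*(G)` -/

/-- The space `G^(n)` of composable `n`-tuples. -/
def Comps (n : ℕ) : Set (Fin n → G) :=
  {v | ∀ (j : Fin n) (h : (j : ℕ) + 1 < n), D.source (v j) = D.range (v ⟨(j : ℕ) + 1, h⟩)}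

/-- The face maps of Matui's complex on tuples:
`d_0` drops the first entry, `d_{n+1}` drops the last one, and the intermediate
`d_i` compose two consecutive entries. -/
def dface (n : ℕ) (i : Fin (n + 2)) (v : Fin (n + 1) → G) : Fin n → G := fun j =>
  if (j : ℕ) + 1 < (i : ℕ) then v j.castSucc
  else if (j : ℕ) + 1 = (i : ℕ) then D.mul (v j.castSucc) (v j.succ)
  else v j.succ

/-- The spaces of Matui's complex: `G^0` in degree `0`, and `G^(n)` in degree `n ≥ 1`. -/
def MSp : ℕ → Type u
  | 0 => ↥(D.unitSpace)
  | (n + 1) => ↥(D.Comps (n + 1))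

instance [TopologicalSpace G] (n : ℕ) : TopologicalSpace (D.MSp n) := by
  cases n with
  | zero => exact (inferInstance : TopologicalSpace ↥(D.unitSpace))
  | succ n => exact (inferInstance : TopologicalSpace ↥(D.Comps (n + 1)))

/-- The boundary maps of Matui's complex, given by alternating sums of pushforwards
along the face maps (in degree one, `∂₁ = s_* - r_*`). -/
def mBdry : (n : ℕ) → ((D.MSp (n + 1)) → ℤ) → (D.MSp n) → ℤ
  | 0, a => fun u =>
      (∑ᶠ x ∈ {x : ↥(D.Comps 1) | D.source (x.1 0) = u.1}, a x)
        - ∑ᶠ x ∈ {x : ↥(D.Comps 1) | D.range (x.1 0) = u.1}, a x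
  | (n + 1), a => fun y =>
      ∑ i : Fin (n + 3), (-1 : ℤ) ^ (i : ℕ) *
        ∑ᶠ x ∈ {x : ↥(D.Comps (n + 2)) | D.dface (n + 1) i x.1 = y.1}, a x

variable [TopologicalSpace G]

/-- The cycle subgroup of Matui's complex in degree `n`. -/
def mCycles : (n : ℕ) → AddSubgroup ((D.MSp n) → ℤ)
  | 0 => ccZSub (D.MSp 0)
  | (n + 1) => AddSubgroup.closure {a | a ∈ ccZ (D.MSp (n + 1)) ∧ D.mBdry n a = 0}

/-- The boundary subgroup of Matui's complex in degree `n`. -/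
def mBdries (n : ℕ) : AddSubgroup ((D.MSp n) → ℤ) :=
  AddSubgroup.closure {c | ∃ a ∈ ccZ (D.MSp (n + 1)), D.mBdry n a = c}

/-- The groupoid homology `H_n(G)` (Crainic–Moerdijk homology, computed by Matui's complex). -/
def Homology (n : ℕ) : Type u :=
  (D.mCycles n) ⧸ AddSubgroup.comap (D.mCycles n).subtype (D.mBdries n)

instance (n : ℕ) : AddCommGroup (D.Homology n) :=
  QuotientAddGroup.Quotient.addCommGroup _

/-- The homology class of a cycle. -/
def hcls {n : ℕ} (a : (D.MSp n) → ℤ) (ha : a ∈ D.mCycles n) : D.Homology n :=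
  QuotientAddGroup.mk ⟨a, ha⟩

end GroupoidData
namespace GroupoidData

variable {G : Type u} {D : GroupoidData G}
variable (D) in

/-- A colouring of an ample groupoid `G` with compact unit space: a finite ordered
collection `(G_0, …, G_d)` of compact open subgroupoids whose unit spaces cover `G⁰`. -/
structure Colouring [TopologicalSpace G] (d : ℕ) where
  sub : Fin (d + 1) → Set G
  isCompact : ∀ i, IsCompact (sub i)
  isOpen : ∀ i, IsOpen (sub i)
  inv_mem : ∀ i, ∀ g ∈ sub i, D.inv g ∈ sub i
  mul_mem : ∀ i, ∀ g h, g ∈ sub i → h ∈ sub i → D.source g = D.range h → D.mul g h ∈ sub i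
  source_mem : ∀ i, ∀ g ∈ sub i, D.source g ∈ sub i
  range_mem : ∀ i, ∀ g ∈ sub i, D.range g ∈ sub i
  covers : D.unitSpace ⊆ ⋃ i, (sub i ∩ D.unitSpace)

/-- A colouring is `K`-Lebesgue if for every unit `x` some colour `G_i` contains `G^x ∩ K`. -/
def Colouring.IsLebesgue [TopologicalSpace G] {D : GroupoidData G} {d : ℕ}
    (C : D.Colouring d) (K : Set G) : Prop :=
  ∀ x ∈ D.unitSpace, ∃ i, {g | D.range g = x} ∩ K ⊆ C.sub i

/-- A colouring is `K`-bounded if every colour is contained in `K`. -/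
def Colouring.IsBounded [TopologicalSpace G] {D : GroupoidData G} {d : ℕ}
    (C : D.Colouring d) (K : Set G) : Prop :=
  ∀ i, C.sub i ⊆ K

end GroupoidData
namespace GroupoidData

variable {G : Type u}

/-- The data of a semi-simplicial `G`-space: a sequence of topological spaces with face maps,
anchor maps to the unit space and a left `G`-action. -/
structure SSG [TopologicalSpace G] (D : GroupoidData G) where
  X : ℕ → Type u
  top : ∀ n, TopologicalSpace (X n)
  face : ∀ n, Fin (n + 2) → X (n + 1) → X n
  anchor : ∀ n, X n → G
  act : ∀ n, G → X n → X n

namespace SSG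

variable [TopologicalSpace G] {D : GroupoidData G}

instance (S : D.SSG) (n : ℕ) : TopologicalSpace (S.X n) := S.top n

variable (S : D.SSG)

/-- The boundary map `∂ = ∑ (-1)^i (∂^i)_*` of the chain complex `ℤ[X_*]`. -/
def bdry (n : ℕ) (a : S.X (n + 1) → ℤ) : S.X n → ℤ :=
  fun y => ∑ i : Fin (n + 2), (-1 : ℤ) ^ (i : ℕ) * ∑ᶠ x ∈ {x | S.face n i x = y}, a x

/-- The module action `(f·a)(x) = ∑_{g ∈ G^{p(x)}} f(g) a(g⁻¹ x)` of `ℤ[G]` on `ℤ[X_n]`. -/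
def actFun (n : ℕ) (f : G → ℤ) (a : S.X n → ℤ) : S.X n → ℤ :=
  fun x => ∑ᶠ g : G, if D.range g = S.anchor n x then f g * a (S.act n (D.inv g) x) else 0

/-- The action of the augmentation `ε(f) ∈ ℤ[G⁰]` on `ℤ[X_n]`. -/
def epsFun (n : ℕ) (f : G → ℤ) (a : S.X n → ℤ) : S.X n → ℤ :=
  fun x => (∑ᶠ g ∈ {g : G | D.source g = S.anchor n x}, f g) * a x

/-- The subgroup of `ℤ[X_n]` generated by the elements `f·a - ε(f)·a`; the quotient by this
subgroup is the group of coinvariants `ℤ[X_n]_G`. -/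
def rel (n : ℕ) : AddSubgroup (S.X n → ℤ) :=
  AddSubgroup.closure
    {c | ∃ f a, f ∈ ccZ G ∧ a ∈ ccZ (S.X n) ∧ c = S.actFun n f a - S.epsFun n f a}

/-- The cycles of the coinvariants complex `(ℤ[X_*]_G, ∂)`, described by their
representatives in `ℤ[X_n]`. -/
def cycles : (n : ℕ) → AddSubgroup (S.X n → ℤ)
  | 0 => ccZSub (S.X 0)
  | (n + 1) => AddSubgroup.closure {a | a ∈ ccZ (S.X (n + 1)) ∧ S.bdry n a ∈ S.rel n}

/-- The boundaries of the coinvariants complex `(ℤ[X_*]_G, ∂)`, described by their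
representatives in `ℤ[X_n]`. -/
def bdries (n : ℕ) : AddSubgroup (S.X n → ℤ) :=
  S.rel n ⊔ AddSubgroup.closure {c | ∃ a ∈ ccZ (S.X (n + 1)), S.bdry n a = c}

/-- The equivariant homology `H_*^G(X)` of the semi-simplicial `G`-space `X_*`:
the homology of the complex of coinvariants `(ℤ[X_*]_G, ∂)`. -/
def homology (n : ℕ) : Type u :=
  (S.cycles n) ⧸ AddSubgroup.comap (S.cycles n).subtype (S.bdries n)

instance (n : ℕ) : AddCommGroup (S.homology n) :=
  QuotientAddGroup.Quotient.addCommGroup _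

/-- The homology class of a cycle. -/
def cls {n : ℕ} (a : S.X n → ℤ) (ha : a ∈ S.cycles n) : S.homology n :=
  QuotientAddGroup.mk ⟨a, ha⟩

end SSG

/-- A morphism of semi-simplicial `G`-spaces: a family of `G`-equivariant étale maps
compatible with the face and anchor maps. -/
structure SSGMor [TopologicalSpace G] {D : GroupoidData G} (S T : D.SSG) where
  map : ∀ n, S.X n → T.X n
  etale : ∀ n, IsLocalHomeomorph (map n)
  face_comm : ∀ n i x, map n (S.face n i x) = T.face n i (map (n + 1) x)
  anchor_comm : ∀ n x, T.anchor n (map n x) = S.anchor n x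
  equivariant : ∀ n g x, D.range g = S.anchor n x → map n (S.act n g x) = T.act n g (map n x)

/-! ### The nerve of a colouring -/

section Nerve

variable [TopologicalSpace G] {D : GroupoidData G} {d : ℕ}

/-- The set `g G_i^{s(g)}`. -/
def Colouring.fib (C : D.Colouring d) (i : Fin (d + 1)) (g : G) : Set G :=
  {w | ∃ h ∈ C.sub i, D.range h = D.source g ∧ w = D.mul g h}

/-- The cover `𝒰` associated to a colouring: all nonempty sets `g G_i^{s(g)}` together with
their colour. -/
def Colouring.coverSet (C : D.Colouring d) : Set (Set G × Fin (d + 1)) :=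
  {U | ∃ g : G, (∃ h ∈ C.sub U.2, D.range h = D.source g) ∧ U.1 = C.fib U.2 g}

/-- The topology on coloured subsets of `G` generated by the sets
`U_{V,i} = {(g G_i^{s(g)}, i) | g ∈ V}` for `V ⊆ G` open. -/
def Colouring.baseTop (C : D.Colouring d) : TopologicalSpace (Set G × Fin (d + 1)) :=
  TopologicalSpace.generateFrom
    {S | ∃ (V : Set G) (i : Fin (d + 1)), IsOpen V ∧
      (∀ g ∈ V, ∃ h ∈ C.sub i, D.range h = D.source g) ∧
      S = {p | ∃ g ∈ V, p = (C.fib i g, i)}}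

/-- The `n`-simplices of the nerve of a colouring: `(n+1)`-tuples of elements of the
associated cover with nonempty intersection. -/
def Colouring.nerveSet (C : D.Colouring d) (n : ℕ) :
    Set (Fin (n + 1) → Set G × Fin (d + 1)) :=
  {u | (∀ j, u j ∈ C.coverSet) ∧ (⋂ j, (u j).1).Nonempty}

/-- The space of `n`-simplices of the nerve. -/
def Colouring.NerveSp (C : D.Colouring d) (n : ℕ) : Type u := ↥(C.nerveSet n)

/-- The topology on the nerve, as a subspace of the product of copies of `N_0`. -/
def Colouring.nerveTop (C : D.Colouring d) (n : ℕ) : TopologicalSpace (C.NerveSp n) :=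
  @instTopologicalSpaceSubtype _ _ (@Pi.topologicalSpace _ _ (fun _ => C.baseTop))

/-- The face maps of the nerve delete one entry of a tuple. -/
def Colouring.nerveFace (C : D.Colouring d) (n : ℕ) (i : Fin (n + 2))
    (x : C.NerveSp (n + 1)) : C.NerveSp n :=
  ⟨fun j => x.1 (i.succAbove j),
    ⟨fun j => x.2.1 _, by
      obtain ⟨w, hw⟩ := x.2.2
      exact ⟨w, Set.mem_iInter.2 fun j => Set.mem_iInter.1 hw (i.succAbove j)⟩⟩⟩

/-- Translation of a subset of `G` by an element of `G`. -/
def trans (g : G) (A : Set G) : Set G :=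
  {w | ∃ a ∈ A, D.source g = D.range a ∧ w = D.mul g a}

/-- The action of `G` on the nerve, translating each member of a tuple. -/
def Colouring.nerveAct (C : D.Colouring d) (n : ℕ) (g : G) (x : C.NerveSp n) :
    C.NerveSp n :=
  if h : (fun j => ((trans (D := D) g (x.1 j).1 : Set G), (x.1 j).2)) ∈ C.nerveSet n
  then ⟨_, h⟩ else x

/-- The nerve of a colouring, as a semi-simplicial `G`-space. -/
def Colouring.nerveSSG (C : D.Colouring d) : D.SSG where
  X n := C.NerveSp n
  top n := C.nerveTop n
  face n i x := C.nerveFace n i x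
  anchor _ x := D.range x.2.2.some
  act n g x := C.nerveAct n g x

/-- The homology `H_*(𝒞)` of a colouring: the equivariant homology of its nerve. -/
def Colouring.homology (C : D.Colouring d) (n : ℕ) : Type u := C.nerveSSG.homology n

/-- The part `N_*^>` of the nerve consisting of tuples with strictly increasing colours. -/
def Colouring.nerveGtSet (C : D.Colouring d) (n : ℕ) :
    Set (Fin (n + 1) → Set G × Fin (d + 1)) :=
  {u | u ∈ C.nerveSet n ∧ ∀ j k : Fin (n + 1), j < k → (u j).2 < (u k).2}

def Colouring.NerveGtSp (C : D.Colouring d) (n : ℕ) : Type u := ↥(C.nerveGtSet n)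

def Colouring.nerveGtTop (C : D.Colouring d) (n : ℕ) : TopologicalSpace (C.NerveGtSp n) :=
  @instTopologicalSpaceSubtype _ _ (@Pi.topologicalSpace _ _ (fun _ => C.baseTop))

def Colouring.nerveGtFace (C : D.Colouring d) (n : ℕ) (i : Fin (n + 2))
    (x : C.NerveGtSp (n + 1)) : C.NerveGtSp n :=
  ⟨fun j => x.1 (i.succAbove j),
    ⟨⟨fun j => x.2.1.1 _, by
        obtain ⟨w, hw⟩ := x.2.1.2
        exact ⟨w, Set.mem_iInter.2 fun j => Set.mem_iInter.1 hw (i.succAbove j)⟩⟩,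
      fun j k hjk => x.2.2 _ _ (Fin.strictMono_succAbove i hjk)⟩⟩

def Colouring.nerveGtAct (C : D.Colouring d) (n : ℕ) (g : G) (x : C.NerveGtSp n) :
    C.NerveGtSp n :=
  if h : (fun j => ((trans (D := D) g (x.1 j).1 : Set G), (x.1 j).2)) ∈ C.nerveGtSet n
  then ⟨_, h⟩ else x

/-- The semi-simplicial `G`-space `N_*^>`. -/
def Colouring.nerveGtSSG (C : D.Colouring d) : D.SSG where
  X n := C.NerveGtSp n
  top n := C.nerveGtTop n
  face n i x := C.nerveGtFace n i x
  anchor _ x := D.range x.2.1.2.some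
  act n g x := C.nerveGtAct n g x

/-- The inclusion `N_*^> → N_*`. -/
def Colouring.nerveIncl (C : D.Colouring d) (n : ℕ) (x : C.NerveGtSp n) : C.NerveSp n :=
  ⟨x.1, x.2.1⟩

end Nerve

end GroupoidData

namespace GroupoidData

instance {G : Type u} [TopologicalSpace G] {D : GroupoidData G} {d : ℕ}
    (C : D.Colouring d) (n : ℕ) : AddCommGroup (C.homology n) :=
  inferInstanceAs (AddCommGroup (C.nerveSSG.homology n))

end GroupoidData

/-!
Two sets `gGᵢ`, `hGᵢ` of the same colour which meet are equal. Hence entries of a simplex of the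
nerve with equal colours coincide, and a simplex is determined by its colours together with a point
common to its entries. An operator on chains of colour tuples which introduces no new colours
therefore acts on chains of the nerve, compatibly with composition. Applied to the projection of
the ordered chains of a simplex onto its increasing chains, and to the homotopy which the acyclic
carrier method provides between this projection and the identity, this yields an equivariant
deformation of the chains of `N_*` onto those of `N_*^>`. Since the functions with finite support
on the fibres of the anchor contain `ℤ[N_n]`, are preserved by all these operators, and are where
the relations defining coinvariants live, the deformation descends to coinvariants. Finally there
is no strictly increasing tuple of length `n + 1 > d + 1` in `{0, …, d}`.
-/

/-! ### Chains of colour tuples -/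

/-- The ordered chains on a set `κ` of colours: the free abelian group on the `n`-tuples in `κ`.
The index is the length of the tuples, so this is the complex of the full simplex on `κ`, shifted
by one and augmented by the empty tuple. -/
abbrev TupleChain (κ : Type*) (n : ℕ) : Type _ := (Fin n → κ) →₀ ℤ

namespace TupleChain

open Finsupp

variable {κ : Type*} {n m l : ℕ}

lemma hom_ext {M : Type*} [AddCommGroup M] {f g : TupleChain κ n →ₗ[ℤ] M}
    (h : ∀ c, f (single c 1) = g (single c 1)) : f = g :=
  lhom_ext' fun c => LinearMap.ext_ring (h c)

/-- The simplicial boundary, the alternating sum over the deletions of an entry. -/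
def boundary (n : ℕ) : TupleChain κ (n + 1) →ₗ[ℤ] TupleChain κ n :=
  linearCombination ℤ fun c => ∑ i : Fin (n + 1), (-1 : ℤ) ^ (i : ℕ) • single (c ∘ i.succAbove) 1

lemma boundary_single (c : Fin (n + 1) → κ) :
    boundary n (single c 1) =
      ∑ i : Fin (n + 1), (-1 : ℤ) ^ (i : ℕ) • single (c ∘ i.succAbove) 1 := by
  simp only [boundary, linearCombination_single, one_smul]

/-- The cone operator, prepending the colour `s` to every tuple. -/
def cone (s : κ) : TupleChain κ n →ₗ[ℤ] TupleChain κ (n + 1) :=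
  lmapDomain ℤ ℤ fun c : Fin n → κ => (Fin.cons s c : Fin (n + 1) → κ)

@[simp] lemma cone_single (s : κ) (c : Fin n → κ) (k : ℤ) :
    cone s (single c k) = single (Fin.cons s c) k :=
  mapDomain_single

lemma cons_comp_succ_succAbove (s : κ) (c : Fin (n + 1) → κ) (i : Fin (n + 1)) :
    (Fin.cons s c : Fin (n + 2) → κ) ∘ i.succ.succAbove = Fin.cons s (c ∘ i.succAbove) := by
  funext j
  refine Fin.cases ?_ (fun k => ?_) j <;> simp

lemma boundary_cone (s : κ) (z : TupleChain κ (n + 1)) :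
    boundary (n + 1) (cone s z) = z - cone s (boundary n z) := by
  suffices h : boundary (n + 1) ∘ₗ cone s = .id - cone s ∘ₗ boundary n from
    LinearMap.congr_fun h z
  refine hom_ext fun c => ?_
  have hzero : (Fin.cons s c : Fin (n + 2) → κ) ∘ Fin.succAbove 0 = c := by
    funext j; simp
  have hcone : cone s (boundary n (single c 1)) = ∑ i : Fin (n + 1),
      (-1 : ℤ) ^ (i : ℕ) • single ((Fin.cons s c : Fin (n + 2) → κ) ∘ i.succ.succAbove) 1 := by
    simp only [boundary_single, map_sum, map_smul, cone_single, cons_comp_succ_succAbove]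
  rw [LinearMap.comp_apply, LinearMap.sub_apply, LinearMap.comp_apply, LinearMap.id_apply, hcone,
    cone_single, boundary_single, Fin.sum_univ_succ, hzero]
  simp only [Fin.val_zero, Fin.val_succ, pow_zero, pow_succ, one_smul, mul_neg_one, neg_smul,
    Finset.sum_neg_distrib, sub_eq_add_neg]

lemma boundary_cone_empty (s : κ) (z : TupleChain κ 0) : boundary 0 (cone s z) = z := by
  suffices h : boundary 0 ∘ₗ cone s = .id from LinearMap.congr_fun h z
  refine hom_ext fun c => ?_
  simp [boundary_single]

lemma single_eq_cone_tail (c : Fin (n + 1) → κ) :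
    (single c 1 : TupleChain κ (n + 1)) = cone (c 0) (single (Fin.tail c) 1) := by
  rw [cone_single, Fin.cons_self_tail]

lemma boundary_boundary (z : TupleChain κ (n + 2)) : boundary n (boundary (n + 1) z) = 0 := by
  revert z
  suffices h : boundary n ∘ₗ boundary (n + 1) = (0 : TupleChain κ (n + 2) →ₗ[ℤ] _) from
    LinearMap.congr_fun h
  induction n with
  | zero =>
    refine hom_ext fun c => ?_
    rw [LinearMap.comp_apply, single_eq_cone_tail, boundary_cone, map_sub, boundary_cone_empty,
      sub_self, LinearMap.zero_apply]
  | succ n ih =>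
    refine hom_ext fun c => ?_
    have hface (y : TupleChain κ (n + 2)) : boundary n (boundary (n + 1) y) = 0 :=
      LinearMap.congr_fun ih y
    rw [LinearMap.comp_apply, single_eq_cone_tail, boundary_cone, map_sub, boundary_cone, hface,
      map_zero, sub_zero, sub_self, LinearMap.zero_apply]

section Local

/-- The chains whose tuples have all their entries in `S`. -/
def chainsIn (S : Set κ) (n : ℕ) : Submodule ℤ (TupleChain κ n) :=
  supported ℤ ℤ {c | ∀ j, c j ∈ S}

/-- An operator is local if it introduces no new colours. -/
def IsLocal (K : TupleChain κ n →ₗ[ℤ] TupleChain κ m) : Prop :=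
  ∀ S : Set κ, ∀ z ∈ chainsIn S n, K z ∈ chainsIn S m

lemma single_mem_chainsIn {S : Set κ} {c : Fin n → κ} (hc : ∀ j, c j ∈ S) (k : ℤ) :
    single c k ∈ chainsIn S n :=
  single_mem_supported ℤ k hc

lemma map_mem_of_mem_supported {M : Type*} [AddCommGroup M] {A : Set (Fin n → κ)}
    {N : Submodule ℤ M} {f : TupleChain κ n →ₗ[ℤ] M} (hf : ∀ c ∈ A, f (single c 1) ∈ N)
    {z : TupleChain κ n} (hz : z ∈ supported ℤ ℤ A) : f z ∈ N := by
  have hle : supported ℤ ℤ A ≤ N.comap f := by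
    rw [supported_eq_span_single, Submodule.span_le]
    rintro _ ⟨c, hc, rfl⟩
    exact hf c hc
  exact hle hz

lemma isLocal_of_single {K : TupleChain κ n →ₗ[ℤ] TupleChain κ m}
    (hK : ∀ (S : Set κ) (c : Fin n → κ), (∀ j, c j ∈ S) → K (single c 1) ∈ chainsIn S m) :
    IsLocal K :=
  fun S _ hz => map_mem_of_mem_supported (hK S) hz

lemma IsLocal.comp {K : TupleChain κ m →ₗ[ℤ] TupleChain κ l}
    {L : TupleChain κ n →ₗ[ℤ] TupleChain κ m} (hK : IsLocal K) (hL : IsLocal L) :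
    IsLocal (K ∘ₗ L) :=
  fun S z hz => hK S _ (hL S z hz)

lemma isLocal_lmapDomain_comp (σ : Fin m → Fin n) :
    IsLocal (lmapDomain ℤ ℤ fun c : Fin n → κ => c ∘ σ) :=
  isLocal_of_single fun S c hc => by
    rw [lmapDomain_apply, mapDomain_single]
    exact single_mem_chainsIn (c := c ∘ σ) (fun j => hc (σ j)) 1

lemma boundary_eq_sum (n : ℕ) : (boundary n : TupleChain κ (n + 1) →ₗ[ℤ] TupleChain κ n) =
    ∑ i : Fin (n + 1), (-1 : ℤ) ^ (i : ℕ) • lmapDomain ℤ ℤ fun c => c ∘ i.succAbove :=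
  hom_ext fun c => by simp [boundary_single]

lemma isLocal_boundary (n : ℕ) :
    IsLocal (boundary n : TupleChain κ (n + 1) →ₗ[ℤ] TupleChain κ n) := by
  intro S z hz
  rw [boundary_eq_sum, LinearMap.sum_apply]
  exact Submodule.sum_mem _ fun i _ =>
    Submodule.smul_mem _ _ (isLocal_lmapDomain_comp i.succAbove S z hz)

lemma cone_mem_chainsIn {S : Set κ} {s : κ} (hs : s ∈ S) {z : TupleChain κ n}
    (hz : z ∈ chainsIn S n) : cone s z ∈ chainsIn S (n + 1) :=
  map_mem_of_mem_supported (fun c hc => by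
    rw [cone_single]
    exact single_mem_chainsIn (Fin.cases hs hc) 1) hz

end Local

section LinearOrder

variable [LinearOrder κ]

/-- The smallest entry of a nonempty tuple. -/
def minEntry (c : Fin (n + 1) → κ) : κ := Finset.univ.inf' Finset.univ_nonempty c

lemma minEntry_le (c : Fin (n + 1) → κ) (j : Fin (n + 1)) : minEntry c ≤ c j :=
  Finset.inf'_le _ (Finset.mem_univ j)

lemma minEntry_mem {S : Set κ} {c : Fin (n + 1) → κ} (hc : ∀ j, c j ∈ S) : minEntry c ∈ S := by
  obtain ⟨j, -, hj⟩ := Finset.exists_mem_eq_inf' Finset.univ_nonempty c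
  rw [minEntry, hj]
  exact hc j

lemma minEntry_of_strictMono {c : Fin (n + 1) → κ} (hc : StrictMono c) : minEntry c = c 0 :=
  le_antisymm (minEntry_le c 0)
    ((Finset.le_inf'_iff _ _).2 fun j _ => hc.monotone (Fin.zero_le j))

/-- The cone operator of the complex of increasing tuples: it prepends `s` where the result is
still increasing, and is zero on the other tuples. -/
def coneLT (s : κ) : TupleChain κ n →ₗ[ℤ] TupleChain κ (n + 1) :=
  linearCombination ℤ fun c => if ∀ j, s < c j then single (Fin.cons s c) 1 else 0

lemma coneLT_single_of_lt {s : κ} {c : Fin n → κ} (h : ∀ j, s < c j) :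
    coneLT s (single c 1) = single (Fin.cons s c) 1 := by
  rw [coneLT, linearCombination_single, one_smul, if_pos h]

lemma coneLT_single_of_le {s : κ} {c : Fin n → κ} {j : Fin n} (h : c j ≤ s) :
    coneLT s (single c 1) = 0 := by
  rw [coneLT, linearCombination_single, one_smul, if_neg fun hlt => (hlt j).not_ge h]

lemma coneLT_mem_chainsIn {S : Set κ} {s : κ} (hs : s ∈ S) {z : TupleChain κ n}
    (hz : z ∈ chainsIn S n) : coneLT s z ∈ chainsIn S (n + 1) :=
  map_mem_of_mem_supported (fun c hc => by
    by_cases h : ∀ j, s < c j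
    · rw [coneLT_single_of_lt h]
      exact single_mem_chainsIn (Fin.cases hs hc) 1
    · obtain ⟨j, hj⟩ := not_forall.1 h
      rw [coneLT_single_of_le (not_lt.1 hj)]
      exact Submodule.zero_mem _) hz

/-- The chains of strictly increasing tuples. -/
def increasing (κ : Type*) [LinearOrder κ] (n : ℕ) : Submodule ℤ (TupleChain κ n) :=
  supported ℤ ℤ {c | StrictMono c}

lemma coneLT_mem_increasing (s : κ) {z : TupleChain κ n} (hz : z ∈ increasing κ n) :
    coneLT s z ∈ increasing κ (n + 1) :=
  map_mem_of_mem_supported (fun c hc => by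
    by_cases h : ∀ j, s < c j
    · rw [coneLT_single_of_lt h]
      have hcons : StrictMono (Fin.cons s c : Fin (n + 1) → κ) :=
        Fin.strictMono_cons.2 ⟨h, hc⟩
      exact single_mem_supported ℤ 1 hcons
    · obtain ⟨j, hj⟩ := not_forall.1 h
      rw [coneLT_single_of_le (not_lt.1 hj)]
      exact Submodule.zero_mem _) hz

/-- Only the deletion of the first entry survives: all other faces still begin with `c 0`. -/
lemma coneLT_boundary_single {c : Fin (n + 1) → κ} (hc : StrictMono c) :
    coneLT (c 0) (boundary n (single c 1)) = single c 1 := by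
  have hfirst : coneLT (c 0) (single (c ∘ Fin.succAbove 0) 1) = single c 1 := by
    rw [coneLT_single_of_lt (c := c ∘ Fin.succAbove 0) fun j => hc (Fin.succ_pos j)]
    congr 1
    exact Fin.cons_self_tail c
  have hothers (i : Fin n) : coneLT (c 0) (single (c ∘ i.succ.succAbove) 1) = 0 := by
    have : NeZero n := ⟨by rintro rfl; exact i.elim0⟩
    exact coneLT_single_of_le (j := 0) (by simp)
  rw [boundary_single, Fin.sum_univ_succ]
  simp only [map_add, map_sum, map_smul, hfirst, hothers, smul_zero, Finset.sum_const_zero,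
    Fin.val_zero, pow_zero, one_smul, add_zero]

lemma boundary_coneLT_single {s : κ} {c : Fin (n + 1) → κ} (hc : StrictMono c)
    (hs : ∀ j, s ≤ c j) :
    boundary (n + 1) (coneLT s (single c 1)) =
      single c 1 - coneLT s (boundary n (single c 1)) := by
  rcases (hs 0).eq_or_lt with rfl | hlt
  · rw [coneLT_single_of_le (j := 0) le_rfl, map_zero, coneLT_boundary_single hc, sub_self]
  · have hall (j) : s < c j := hlt.trans_le (hc.monotone (Fin.zero_le j))
    have hfaces : coneLT s (boundary n (single c 1)) = cone s (boundary n (single c 1)) := by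
      simp only [boundary_single, map_sum, map_smul]
      refine Finset.sum_congr rfl fun i _ => ?_
      rw [coneLT_single_of_lt (c := c ∘ i.succAbove) fun j => hall _, cone_single]
    rw [coneLT_single_of_lt hall, ← cone_single, boundary_cone, hfaces]

lemma boundary_coneLT {s : κ} {z : TupleChain κ (n + 1)} (hz : z ∈ increasing κ (n + 1))
    (hs : z ∈ chainsIn (Ici s) (n + 1)) :
    boundary (n + 1) (coneLT s z) = z - coneLT s (boundary n z) := by
  have hz' : z ∈ supported ℤ ℤ {c : Fin (n + 1) → κ | StrictMono c ∧ ∀ j, s ≤ c j} :=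
    fun c hc => ⟨hz hc, hs hc⟩
  refine sub_eq_zero.1 (map_mem_of_mem_supported (N := ⊥)
    (f := boundary (n + 1) ∘ₗ coneLT s - (.id - coneLT s ∘ₗ boundary n)) ?_ hz')
  rintro c ⟨hc, hsc⟩
  exact sub_eq_zero.2 (boundary_coneLT_single hc hsc)

lemma boundary_coneLT_empty (s : κ) (z : TupleChain κ 0) : boundary 0 (coneLT s z) = z := by
  have hcone : coneLT s = (cone s : TupleChain κ 0 →ₗ[ℤ] _) :=
    hom_ext fun c => by rw [coneLT_single_of_lt fun j => j.elim0, cone_single]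
  rw [hcone, boundary_cone_empty]

/-- The projection of the ordered chains onto the chains of increasing tuples, built by the method
of acyclic carriers: the carrier of a tuple is the complex of increasing tuples in its colours,
contracted by `coneLT` at the smallest one. -/
def sorting : (n : ℕ) → TupleChain κ n →ₗ[ℤ] TupleChain κ n
  | 0 => .id
  | n + 1 => linearCombination ℤ fun c => coneLT (minEntry c) (sorting n (boundary n (single c 1)))

lemma sorting_succ_single (c : Fin (n + 1) → κ) :
    sorting (n + 1) (single c 1) =
      coneLT (minEntry c) (sorting n (boundary n (single c 1))) := by
  rw [sorting, linearCombination_single, one_smul]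

lemma isLocal_sorting : ∀ n : ℕ, IsLocal (sorting n : TupleChain κ n →ₗ[ℤ] TupleChain κ n)
  | 0 => fun _ _ hz => hz
  | n + 1 => isLocal_of_single fun S c hc => by
    rw [sorting_succ_single]
    exact coneLT_mem_chainsIn (minEntry_mem hc)
      (isLocal_sorting n S _ (isLocal_boundary n S _ (single_mem_chainsIn hc 1)))

lemma sorting_mem_increasing (z : TupleChain κ n) : sorting n z ∈ increasing κ n := by
  induction n with
  | zero => exact fun c _ => Subsingleton.strictMono c
  | succ n ih =>
    refine map_mem_of_mem_supported (A := univ) (fun c _ => ?_) (by simp)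
    rw [sorting_succ_single]
    exact coneLT_mem_increasing _ (ih _)

lemma boundary_sorting (z : TupleChain κ (n + 1)) :
    boundary n (sorting (n + 1) z) = sorting n (boundary n z) := by
  suffices h : boundary n ∘ₗ sorting (n + 1) = sorting n ∘ₗ boundary n (κ := κ) from
    LinearMap.congr_fun h z
  induction n with
  | zero =>
    refine hom_ext fun c => ?_
    rw [LinearMap.comp_apply, LinearMap.comp_apply, sorting_succ_single, boundary_coneLT_empty]
  | succ n ih =>
    refine hom_ext fun c => ?_
    have hcarrier : sorting (n + 1) (boundary (n + 1) (single c 1)) ∈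
        chainsIn (Ici (minEntry c)) (n + 1) :=
      (isLocal_sorting _).comp (isLocal_boundary _) _ _ (single_mem_chainsIn (minEntry_le c) 1)
    have hcycle : boundary n (sorting (n + 1) (boundary (n + 1) (single c 1))) = 0 := by
      rw [← LinearMap.comp_apply, ih (boundary (n + 1) (single c 1)), LinearMap.comp_apply,
        boundary_boundary, map_zero]
    rw [LinearMap.comp_apply, LinearMap.comp_apply, sorting_succ_single,
      boundary_coneLT (sorting_mem_increasing _) hcarrier, hcycle, map_zero, sub_zero]

lemma sorting_single_of_strictMono {c : Fin n → κ} (hc : StrictMono c) :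
    sorting n (single c 1) = single c 1 := by
  induction n with
  | zero => rfl
  | succ n ih =>
    have hfaces : sorting n (boundary n (single c 1)) = boundary n (single c 1) := by
      simp only [boundary_single, map_sum, map_smul]
      refine Finset.sum_congr rfl fun i _ => ?_
      rw [ih (hc.comp (Fin.strictMono_succAbove i))]
    rw [sorting_succ_single, hfaces, minEntry_of_strictMono hc, coneLT_boundary_single hc]

/-- The chain homotopy from `sorting` to the identity, obtained by contracting the ordered chains
in the colours of a tuple with `cone` at the smallest one. -/
def sortingHomotopy : (n : ℕ) → TupleChain κ n →ₗ[ℤ] TupleChain κ (n + 1)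
  | 0 => 0
  | n + 1 => linearCombination ℤ fun c => cone (minEntry c)
      (single c 1 - sorting (n + 1) (single c 1) - sortingHomotopy n (boundary n (single c 1)))

lemma sortingHomotopy_succ_single (c : Fin (n + 1) → κ) :
    sortingHomotopy (n + 1) (single c 1) = cone (minEntry c)
      (single c 1 - sorting (n + 1) (single c 1) -
        sortingHomotopy n (boundary n (single c 1))) := by
  rw [sortingHomotopy, linearCombination_single, one_smul]

lemma isLocal_sortingHomotopy :
    ∀ n : ℕ, IsLocal (sortingHomotopy n : TupleChain κ n →ₗ[ℤ] TupleChain κ (n + 1))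
  | 0 => fun _ _ _ => Submodule.zero_mem _
  | n + 1 => isLocal_of_single fun S c hc => by
    have hc' : single c 1 ∈ chainsIn S (n + 1) := single_mem_chainsIn hc 1
    rw [sortingHomotopy_succ_single]
    exact cone_mem_chainsIn (minEntry_mem hc) (Submodule.sub_mem _
      (Submodule.sub_mem _ hc' (isLocal_sorting _ S _ hc'))
      (isLocal_sortingHomotopy n S _ (isLocal_boundary n S _ hc')))

lemma boundary_sortingHomotopy (n : ℕ) (z : TupleChain κ (n + 1)) :
    boundary (n + 1) (sortingHomotopy (n + 1) z) =
      z - sorting (n + 1) z - sortingHomotopy n (boundary n z) := by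
  suffices h : boundary (n + 1) ∘ₗ sortingHomotopy (n + 1) =
      .id - sorting (n + 1) - sortingHomotopy n ∘ₗ boundary n (κ := κ) from
    LinearMap.congr_fun h z
  refine hom_ext fun c => ?_
  have hcycle : boundary n (single c 1 - sorting (n + 1) (single c 1) -
      sortingHomotopy n (boundary n (single c 1))) = 0 := by
    rw [map_sub, map_sub, boundary_sorting]
    match n with
    | 0 => simp [sorting, sortingHomotopy]
    | n + 1 =>
      rw [boundary_sortingHomotopy n, boundary_boundary, map_zero, sub_zero, sub_self]
  rw [LinearMap.comp_apply, sortingHomotopy_succ_single, boundary_cone, hcycle, map_zero, sub_zero]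
  rfl

/-- The coordinate projection onto the increasing tuples. -/
def increasingPart (n : ℕ) : TupleChain κ n →ₗ[ℤ] TupleChain κ n :=
  linearCombination ℤ fun c => if StrictMono c then single c 1 else 0

lemma increasingPart_single (c : Fin n → κ) :
    increasingPart n (single c 1) = if StrictMono c then single c 1 else 0 := by
  rw [increasingPart, linearCombination_single, one_smul]

lemma isLocal_increasingPart (n : ℕ) :
    IsLocal (increasingPart n : TupleChain κ n →ₗ[ℤ] TupleChain κ n) :=
  isLocal_of_single fun S c hc => by
    rw [increasingPart_single]
    split_ifs
    · exact single_mem_chainsIn hc 1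
    · exact Submodule.zero_mem _

lemma increasingPart_comp_sorting (n : ℕ) :
    increasingPart n ∘ₗ sorting n = (sorting n : TupleChain κ n →ₗ[ℤ] TupleChain κ n) := by
  refine LinearMap.ext fun z => sub_eq_zero.1 (map_mem_of_mem_supported (N := ⊥)
    (f := increasingPart n - .id) (fun c hc => ?_) (sorting_mem_increasing z))
  rw [Submodule.mem_bot, LinearMap.sub_apply, increasingPart_single,
    if_pos (show StrictMono c from hc)]
  exact sub_self _

lemma sorting_comp_increasingPart (n : ℕ) :
    sorting n ∘ₗ increasingPart n =
      (increasingPart n : TupleChain κ n →ₗ[ℤ] TupleChain κ n) := by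
  refine hom_ext fun c => ?_
  rw [LinearMap.comp_apply, increasingPart_single]
  split_ifs with hc
  · exact sorting_single_of_strictMono hc
  · exact map_zero _

end LinearOrder

end TupleChain

/-! ### Fibrewise finite functions -/

section FiberwiseFinite

variable {B X Y Z : Type*}

/-- The integer-valued functions on `X` with finite support on each fibre of `p : X → B`. They
contain the compactly supported functions when `p` is étale, and pushforwards along maps over `B`
are well behaved on them without any topological condition on the maps. -/
def fiberwiseFinite (p : X → B) : AddSubgroup (X → ℤ) where
  carrier := {a | ∀ b, (support a ∩ p ⁻¹' {b}).Finite}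
  zero_mem' b := by simp
  add_mem' ha hb b := ((ha b).union (hb b)).subset <| by
    rw [← union_inter_distrib_right]
    exact inter_subset_inter_left _ (support_add _ _)
  neg_mem' ha b := by simpa only [support_neg] using ha b

lemma pushf_eq_sum_filter {φ : X → Y} {a : X → ℤ} {y : Y} {s : Finset X}
    (hs : ∀ x, φ x = y → a x ≠ 0 → x ∈ s) : pushf φ a y = ∑ x ∈ s with φ x = y, a x :=
  finsum_mem_eq_sum_of_inter_support_eq a <| by
    ext x
    simp only [mem_inter_iff, mem_preimage, mem_singleton_iff, mem_support, Finset.coe_filter,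
      mem_ofPred_eq]
    exact ⟨fun ⟨hx, hax⟩ => ⟨⟨hs x hx hax, hx⟩, hax⟩, fun ⟨⟨_, hx⟩, hax⟩ => ⟨hx, hax⟩⟩

lemma exists_of_pushf_ne_zero {φ : X → Y} {a : X → ℤ} {y : Y} (h : pushf φ a y ≠ 0) :
    ∃ x, φ x = y ∧ a x ≠ 0 :=
  exists_ne_zero_of_finsum_mem_ne_zero h

lemma pushf_apply_of_injective {φ : X → Y} (hφ : Injective φ) (a : X → ℤ) (x : X) :
    pushf φ a (φ x) = a x := by
  rw [pushf, ← image_singleton, preimage_image_eq _ hφ, finsum_mem_singleton]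

namespace fiberwiseFinite

variable {p : X → B} {q : Y → B} {r : Z → B}

lemma pushf_mem {φ : X → Y} (hφ : ∀ x, q (φ x) = p x) {a : X → ℤ}
    (ha : a ∈ fiberwiseFinite p) : pushf φ a ∈ fiberwiseFinite q := fun b => by
  refine ((ha b).image φ).subset ?_
  rintro y ⟨hy, hyb⟩
  obtain ⟨x, rfl, hx⟩ := exists_of_pushf_ne_zero hy
  exact ⟨x, ⟨hx, (hφ x).symm.trans hyb⟩, rfl⟩

lemma finite_fiber_inter_support {φ : X → Y} (hφ : ∀ x, q (φ x) = p x) {a : X → ℤ}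
    (ha : a ∈ fiberwiseFinite p) (y : Y) : (φ ⁻¹' {y} ∩ support a).Finite :=
  (ha (q y)).subset fun x hx => ⟨hx.2, by rw [mem_preimage, ← hφ, hx.1]; rfl⟩

/-- The pushforward along a map over `B`. -/
def push (φ : X → Y) (hφ : ∀ x, q (φ x) = p x) : fiberwiseFinite p →+ fiberwiseFinite q where
  toFun a := ⟨pushf φ a, pushf_mem hφ a.2⟩
  map_zero' := Subtype.ext <| funext fun _ => finsum_mem_zero _
  map_add' a b := Subtype.ext <| funext fun y => finsum_mem_add_distrib'
    (finite_fiber_inter_support hφ a.2 y) (finite_fiber_inter_support hφ b.2 y)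

@[simp] lemma coe_push (φ : X → Y) (hφ : ∀ x, q (φ x) = p x) (a : fiberwiseFinite p) :
    (push φ hφ a : Y → ℤ) = pushf φ a :=
  rfl

lemma push_comp_push {φ : X → Y} {ψ : Y → Z} (hφ : ∀ x, q (φ x) = p x)
    (hψ : ∀ y, r (ψ y) = q y) :
    (push ψ hψ).comp (push φ hφ) =
      push (p := p) (q := r) (ψ ∘ φ) fun x => (hψ (φ x)).trans (hφ x) := by
  refine AddMonoidHom.ext fun a => Subtype.ext <| funext fun z => ?_
  set s : Finset X := (a.2 (r z)).toFinset
  have hs (x : X) (hx : r (ψ (φ x)) = r z) (hax : a.1 x ≠ 0) : x ∈ s :=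
    (Finite.mem_toFinset _).2 ⟨hax, by rw [mem_preimage, ← hφ, ← hψ, hx]; rfl⟩
  have hinner (y : Y) (hy : ψ y = z) : pushf φ a y = ∑ x ∈ s with φ x = y, a.1 x :=
    pushf_eq_sum_filter fun x hx => hs x (by rw [hx, hy])
  have himage (y : Y) (hy : ψ y = z) (hne : pushf φ a y ≠ 0) : y ∈ s.image φ := by
    obtain ⟨x, rfl, hx⟩ := exists_of_pushf_ne_zero hne
    exact Finset.mem_image_of_mem φ (hs x (by rw [hy]) hx)
  calc pushf ψ (pushf φ a) z
      = ∑ y ∈ s.image φ with ψ y = z, pushf φ a y := pushf_eq_sum_filter himage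
    _ = ∑ y ∈ s.image φ with ψ y = z, ∑ x ∈ s with φ x = y, a.1 x :=
        Finset.sum_congr rfl fun y hy => hinner y (Finset.mem_filter.1 hy).2
    _ = ∑ x ∈ s with ψ (φ x) = z, a.1 x := by
        rw [← Finset.sum_fiberwise_of_maps_to (s := s.filter fun x => ψ (φ x) = z)
          (t := (s.image φ).filter fun y => ψ y = z) (g := φ) fun x hx => by
            simp only [Finset.mem_filter] at hx ⊢
            exact ⟨Finset.mem_image_of_mem φ hx.1, hx.2⟩]
        refine Finset.sum_congr rfl fun y hy => ?_
        rw [Finset.filter_filter]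
        refine Finset.sum_congr (Finset.filter_congr fun x _ => ?_) fun _ _ => rfl
        exact ⟨fun h => ⟨by rw [h, (Finset.mem_filter.1 hy).2], h⟩, And.right⟩
    _ = pushf (ψ ∘ φ) a z := (pushf_eq_sum_filter fun x hx => hs x (congrArg r hx)).symm

lemma push_id : push (p := p) (q := p) id (fun _ => rfl) = AddMonoidHom.id _ :=
  AddMonoidHom.ext fun a => Subtype.ext <| funext fun x =>
    pushf_apply_of_injective injective_id a.1 x

/-- The restriction to a subset, extended by zero. -/
def restrictTo (p : X → B) (s : Set X) : fiberwiseFinite p →+ fiberwiseFinite p where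
  toFun a := ⟨s.indicator a, fun b => (a.2 b).subset <| inter_subset_inter_left _ <|
    support_indicator.trans_subset inter_subset_right⟩
  map_zero' := Subtype.ext (indicator_zero ℤ s)
  map_add' a b := Subtype.ext (indicator_add' s a.1 b.1)

@[simp] lemma coe_restrictTo (s : Set X) (a : fiberwiseFinite p) :
    (restrictTo p s a : X → ℤ) = s.indicator a :=
  rfl

lemma pushf_congr {φ ψ : X → Y} {a : X → ℤ} (h : ∀ x, a x ≠ 0 → φ x = ψ x) :
    pushf φ a = pushf ψ a := by
  refine funext fun y => finsum_mem_inter_support_eq a _ _ (Set.ext fun x => ?_)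
  exact and_congr_left fun hx => by
    rw [mem_preimage, mem_preimage, h x hx]

lemma push_comp_restrictTo_congr {φ ψ : X → Y} (hφ : ∀ x, q (φ x) = p x) (hψ : ∀ x, q (ψ x) = p x)
    {s : Set X} (h : EqOn φ ψ s) :
    (push φ hφ).comp (restrictTo p s) = (push ψ hψ).comp (restrictTo p s) :=
  AddMonoidHom.ext fun _ => Subtype.ext <| pushf_congr fun _ hx => h (mem_of_indicator_ne_zero hx)

lemma restrictTo_comp_push {φ : X → Y} (hφ : ∀ x, q (φ x) = p x) (t : Set Y) :
    (restrictTo q t).comp (push φ hφ) = (push φ hφ).comp (restrictTo p (φ ⁻¹' t)) := by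
  refine AddMonoidHom.ext fun a => Subtype.ext <| funext fun y => ?_
  by_cases hy : y ∈ t
  · refine (indicator_of_mem hy _).trans (finsum_mem_congr rfl fun x hx => ?_)
    have hx : x ∈ φ ⁻¹' t := by rwa [mem_preimage, show φ x = y from hx]
    exact (indicator_of_mem hx a.1).symm
  · refine (indicator_of_notMem hy _).trans
      (finsum_mem_eq_zero_of_forall_eq_zero fun x hx => ?_).symm
    have hx : x ∉ φ ⁻¹' t := by rwa [mem_preimage, show φ x = y from hx]
    exact indicator_of_notMem hx a.1

lemma restrictTo_comp_restrictTo (s t : Set X) :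
    (restrictTo p s).comp (restrictTo p t) = restrictTo p (s ∩ t) :=
  AddMonoidHom.ext fun a => Subtype.ext (indicator_indicator s t a.1)

/-- The pullback along an injective map over `B`. -/
def pull (φ : X → Y) (hφ : ∀ x, q (φ x) = p x) (hinj : Injective φ) :
    fiberwiseFinite q →+ fiberwiseFinite p where
  toFun a := ⟨a.1 ∘ φ, fun b => ((a.2 b).preimage hinj.injOn).subset
    fun x hx => ⟨hx.1, (hφ x).trans hx.2⟩⟩
  map_zero' := rfl
  map_add' _ _ := rfl

lemma pull_comp_push {φ : X → Y} (hφ : ∀ x, q (φ x) = p x) (hinj : Injective φ) :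
    (pull φ hφ hinj).comp (push φ hφ) = AddMonoidHom.id _ :=
  AddMonoidHom.ext fun a => Subtype.ext <| funext fun x => pushf_apply_of_injective hinj a.1 x

lemma push_comp_pull {φ : X → Y} (hφ : ∀ x, q (φ x) = p x) (hinj : Injective φ) :
    (push φ hφ).comp (pull φ hφ hinj) = restrictTo q (Set.range φ) := by
  refine AddMonoidHom.ext fun a => Subtype.ext <| funext fun y => ?_
  by_cases hy : y ∈ Set.range φ
  · obtain ⟨x, rfl⟩ := hy
    exact (pushf_apply_of_injective hinj (a.1 ∘ φ) x).trans
      (indicator_of_mem (mem_range_self x) _).symm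
  · refine Eq.trans ?_ (indicator_of_notMem hy _).symm
    by_contra hne
    obtain ⟨x, rfl, -⟩ := exists_of_pushf_ne_zero hne
    exact hy (mem_range_self x)

end fiberwiseFinite

end FiberwiseFinite

/-! ### Compactly supported functions and local homeomorphisms -/

section LocalHomeomorph

variable {X Y : Type*} [TopologicalSpace X] [TopologicalSpace Y]

lemma prespectralSpace_of_isLocalHomeomorph [PrespectralSpace Y] {p : X → Y}
    (hp : IsLocalHomeomorph p) : PrespectralSpace X := by
  choose e he _ using hp
  let U (x : X) : TopologicalSpace.Opens X := ⟨(e x).source, (e x).open_source⟩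
  have hprespectral (x : X) : PrespectralSpace (U x) :=
    (e x).isOpenEmbedding_restrict.prespectralSpace
  exact PrespectralSpace.of_isOpenCover (U := U) <| top_le_iff.1 fun x _ =>
    TopologicalSpace.Opens.mem_iSup.2 ⟨x, he x⟩

lemma exists_isClopen_of_mem_isOpen [T2Space X] [PrespectralSpace X] {x : X} {V : Set X}
    (hV : IsOpen V) (hx : x ∈ V) : ∃ U, IsClopen U ∧ x ∈ U ∧ U ⊆ V := by
  obtain ⟨U, ⟨hUo, hUc⟩, hxU, hUV⟩ :=
    PrespectralSpace.isTopologicalBasis.exists_subset_of_mem_open hx hV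
  exact ⟨U, ⟨hUc.isClosed, hUo⟩, hxU, hUV⟩

lemma indicator_mem_ccZ {U : Set X} (hU : IsClopen U) {a : X → ℤ} (ha : a ∈ ccZ X) :
    U.indicator a ∈ ccZ X :=
  ⟨ha.1.indicator fun x hx => by simp [hU.frontier_eq] at hx,
    ha.2.mono (support_indicator.trans_subset inter_subset_right)⟩

lemma isCompact_support {a : X → ℤ} (ha : a ∈ ccZ X) : IsCompact (support a) := by
  have hclosed : IsClosed (support a) := (isClosed_discrete {0}ᶜ).preimage ha.1
  exact hclosed.closure_eq ▸ ha.2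

lemma ccZ_le_fiberwiseFinite [T1Space Y] {p : X → Y} (hp : IsLocalHomeomorph p) :
    ccZSub X ≤ fiberwiseFinite p := fun a ha b => by
  have hcompact : IsCompact (support a ∩ p ⁻¹' {b}) :=
    (isCompact_support ha).inter_right (isClosed_singleton.preimage hp.continuous)
  refine hcompact.finite ((hp.isLocalHomeomorphOn.mono (subset_univ _)).isDiscrete_of_image ?_)
  exact (subsingleton_singleton.anti (image_subset_iff.2 inter_subset_right)).isDiscrete

lemma ccZ_induction {P : (X → ℤ) → Prop}
    (hadd : ∀ a ∈ ccZ X, ∀ b ∈ ccZ X, P a → P b → P (a + b))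
    (hlocal : ∀ x, ∃ U, IsClopen U ∧ x ∈ U ∧ ∀ a ∈ ccZ X, support a ⊆ U → P a)
    (hzero : P 0) {a : X → ℤ} (ha : a ∈ ccZ X) : P a := by
  suffices h : ∃ U, IsClopen U ∧ support a ⊆ U ∧ ∀ b ∈ ccZ X, support b ⊆ U → P b by
    obtain ⟨U, -, haU, hU⟩ := h
    exact hU a ha haU
  refine (isCompact_support ha).induction_on
    (p := fun s => ∃ U, IsClopen U ∧ s ⊆ U ∧ ∀ b ∈ ccZ X, support b ⊆ U → P b) ?_ ?_ ?_ ?_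
  · exact ⟨∅, isClopen_empty, Subset.rfl, fun b _ hb => support_eq_empty_iff.1
      (subset_empty_iff.1 hb) ▸ hzero⟩
  · rintro s t hst ⟨U, hU, htU, hP⟩
    exact ⟨U, hU, hst.trans htU, hP⟩
  · rintro s t ⟨U, hU, hsU, hPU⟩ ⟨V, hV, htV, hPV⟩
    refine ⟨U ∪ V, hU.union hV, union_subset_union hsU htV, fun b hb hbUV => ?_⟩
    rw [← indicator_self_add_compl U b]
    refine hadd _ (indicator_mem_ccZ hU hb) _ (indicator_mem_ccZ hU.compl hb)
      (hPU _ (indicator_mem_ccZ hU hb) support_indicator_subset)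
      (hPV _ (indicator_mem_ccZ hU.compl hb) ?_)
    rw [support_indicator]
    exact fun x ⟨hxU, hxb⟩ => (hbUV hxb).resolve_left hxU
  · intro x _
    obtain ⟨U, hU, hxU, hP⟩ := hlocal x
    exact ⟨U, mem_nhdsWithin_of_mem_nhds (hU.isOpen.mem_nhds hxU), U, hU, Subset.rfl, hP⟩

lemma pushf_mem_ccZ_of_injOn [T2Space Y] {φ : X → Y} (hφ : IsLocalHomeomorph φ) {a : X → ℤ}
    (ha : a ∈ ccZ X) (hinj : InjOn φ (support a)) : pushf φ a ∈ ccZ Y := by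
  have himage (x : X) (hx : a x ≠ 0) : pushf φ a (φ x) = a x :=
    (finsum_mem_inter_support_eq a _ {x} (Set.ext fun y =>
      and_congr_left fun hy => ⟨fun h => hinj hy hx h, fun h => congrArg φ h⟩)).trans
      (finsum_mem_singleton ..)
  have hfiber (k : ℤ) (hk : k ≠ 0) : pushf φ a ⁻¹' {k} = φ '' (a ⁻¹' {k}) := by
    ext y
    constructor
    · rintro rfl
      obtain ⟨x, rfl, hx⟩ := exists_of_pushf_ne_zero hk
      exact ⟨x, (himage x hx).symm, rfl⟩
    · rintro ⟨x, rfl, rfl⟩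
      exact himage x hk
  have hsupport : pushf φ a ⁻¹' {0} = (φ '' support a)ᶜ := by
    ext y
    refine ⟨?_, fun hy => by_contra fun hne => hy ?_⟩
    · rintro hy ⟨x, hx, rfl⟩
      exact hx ((himage x hx).symm.trans hy)
    · obtain ⟨x, rfl, hx⟩ := exists_of_pushf_ne_zero hne
      exact mem_image_of_mem φ hx
  have hcompact : IsCompact (φ '' support a) := (isCompact_support ha).image hφ.continuous
  refine ⟨continuous_discrete_rng.2 fun k => ?_, HasCompactSupport.intro hcompact fun y hy =>
    show y ∈ pushf φ a ⁻¹' {0} from hsupport ▸ hy⟩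
  obtain rfl | hk := eq_or_ne k 0
  · exact hsupport ▸ hcompact.isClosed.isOpen_compl
  · exact hfiber k hk ▸ hφ.isOpenMap _ ((isOpen_discrete {k}).preimage ha.1)

lemma pushf_mem_ccZ [T2Space X] [PrespectralSpace X] [T2Space Y] {φ : X → Y}
    (hφ : IsLocalHomeomorph φ) {a : X → ℤ} (ha : a ∈ ccZ X) : pushf φ a ∈ ccZ Y := by
  refine ccZ_induction (P := fun a => pushf φ a ∈ ccZ Y) (fun a ha b hb hPa hPb => ?_)
    (fun x => ?_) ?_ ha
  · have hfin (c : X → ℤ) (hc : c ∈ ccZ X) (y : Y) : (φ ⁻¹' {y} ∩ support c).Finite :=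
      inter_comm (support c) _ ▸ ccZ_le_fiberwiseFinite hφ hc y
    have hadd : pushf φ (a + b) = pushf φ a + pushf φ b :=
      funext fun y => finsum_mem_add_distrib' (hfin a ha y) (hfin b hb y)
    exact hadd ▸ (ccZSub Y).add_mem hPa hPb
  · obtain ⟨e, hxe, he⟩ := hφ x
    obtain ⟨U, hU, hxU, hUe⟩ := exists_isClopen_of_mem_isOpen e.open_source hxe
    refine ⟨U, hU, hxU, fun a ha haU => pushf_mem_ccZ_of_injOn hφ ha ?_⟩
    exact he ▸ e.injOn.mono (haU.trans hUe)
  · have hzero : pushf φ 0 = 0 := funext fun _ => finsum_mem_zero _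
    exact hzero ▸ (ccZSub Y).zero_mem

lemma comp_mem_ccZ_of_isClosedEmbedding {φ : X → Y} (hφ : Topology.IsClosedEmbedding φ)
    {a : Y → ℤ} (ha : a ∈ ccZ Y) : a ∘ φ ∈ ccZ X :=
  ⟨ha.1.comp hφ.continuous, ha.2.comp_isClosedEmbedding hφ⟩

end LocalHomeomorph

/-! ### Étale semi-simplicial spaces with a groupoid action -/

namespace GroupoidData

open fiberwiseFinite

variable {G : Type u} [TopologicalSpace G] {D : GroupoidData G}

namespace IsAmpleGroupoid

lemma prespectralSpace (hD : D.IsAmpleGroupoid) : PrespectralSpace G :=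
  .of_isTopologicalBasis (TopologicalSpace.isTopologicalBasis_of_isOpen_of_nhds
    (s := {B : Set G | IsOpen B ∧ IsCompact B}) (fun _ hB => hB.1) fun g U hg hU =>
      have ⟨B, hgB, hBU, hBo, hBc, _⟩ := hD.ample g U hU hg
      ⟨B, ⟨hBo, hBc⟩, hgB, hBU⟩) fun _ hB => hB.2

lemma inv_mul_cancel_left (hD : D.IsAmpleGroupoid) {g h : G} (hgh : D.source g = D.range h) :
    D.mul (D.inv g) (D.mul g h) = h := by
  rw [← hD.mul_assoc _ _ _ (hD.source_inv g) hgh, hD.inv_mul, hgh, hD.unit_mul]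

lemma mul_inv_cancel_left (hD : D.IsAmpleGroupoid) {g h : G} (hgh : D.range g = D.range h) :
    D.mul g (D.mul (D.inv g) h) = h := by
  rw [← hD.mul_assoc _ _ _ (hD.range_inv g).symm ((hD.source_inv g).trans hgh), hD.mul_inv, hgh,
    hD.unit_mul]

lemma inv_inv (hD : D.IsAmpleGroupoid) (g : G) : D.inv (D.inv g) = g := by
  have h := hD.inv_mul_cancel_left (hD.source_inv g)
  rwa [hD.inv_mul, ← hD.range_inv, ← hD.source_inv, hD.mul_unit] at h

end IsAmpleGroupoid

namespace SSG

variable {S T R : D.SSG} {n m l : ℕ}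

/-- An étale semi-simplicial `G`-space: the spaces are Hausdorff and étale over the units, the
faces respect the anchors, and the arrows act by bijections between the fibres of the anchor. -/
structure IsEtale (S : D.SSG) : Prop where
  t2 : ∀ n, T2Space (S.X n)
  etale_anchor : ∀ n, IsLocalHomeomorph (S.anchor n)
  anchor_face : ∀ n i x, S.anchor n (S.face n i x) = S.anchor (n + 1) x
  anchor_act : ∀ n g x, D.source g = S.anchor n x → S.anchor n (S.act n g x) = D.range g
  inv_act : ∀ n g x, D.source g = S.anchor n x → S.act n (D.inv g) (S.act n g x) = x

/-- The chains on which pushforwards are computed; they contain `ℤ[X_n]` and the relations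
defining its coinvariants. -/
abbrev Chain (S : D.SSG) (n : ℕ) : AddSubgroup (S.X n → ℤ) := fiberwiseFinite (S.anchor n)

lemma ccZ_le_chain (hD : D.IsAmpleGroupoid) (hS : S.IsEtale) (n : ℕ) :
    ccZSub (S.X n) ≤ S.Chain n :=
  have := hD.t2
  ccZ_le_fiberwiseFinite (hS.etale_anchor n)

lemma act_inv_act (hD : D.IsAmpleGroupoid) (hS : S.IsEtale) {g : G} {x : S.X n}
    (hg : D.range g = S.anchor n x) : S.act n g (S.act n (D.inv g) x) = x := by
  simpa only [hD.inv_inv] using hS.inv_act n (D.inv g) x ((hD.source_inv g).trans hg)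

lemma anchor_inv_act (hD : D.IsAmpleGroupoid) (hS : S.IsEtale) {g : G} {x : S.X n}
    (hg : D.range g = S.anchor n x) : S.anchor n (S.act n (D.inv g) x) = D.source g := by
  rw [hS.anchor_act n _ _ ((hD.source_inv g).trans hg), hD.range_inv]

lemma actFun_eq_sum {f : G → ℤ} (hf : f ∈ fiberwiseFinite D.range) (a : S.X n → ℤ) (x : S.X n) :
    S.actFun n f a x =
      ∑ g ∈ (hf (S.anchor n x)).toFinset, f g * a (S.act n (D.inv g) x) := by
  have hsupport : support (fun g => if D.range g = S.anchor n x then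
      f g * a (S.act n (D.inv g) x) else 0) ⊆ support f ∩ D.range ⁻¹' {S.anchor n x} := by
    intro g hg
    obtain ⟨hrange, hne⟩ := ite_ne_right_iff.1 hg
    exact ⟨left_ne_zero_of_mul hne, hrange⟩
  refine (finsum_eq_sum_of_support_subset_of_finite _ hsupport (hf _)).trans ?_
  exact Finset.sum_congr rfl fun g hg => if_pos ((Finite.mem_toFinset _).1 hg).2

lemma actFun_mem_chain (hD : D.IsAmpleGroupoid) (hS : S.IsEtale) {f : G → ℤ}
    (hf : f ∈ fiberwiseFinite D.range) {a : S.X n → ℤ} (ha : a ∈ S.Chain n) :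
    S.actFun n f a ∈ S.Chain n := fun u => by
  refine ((hf u).biUnion fun g _ => (ha (D.source g)).image (S.act n g)).subset ?_
  rintro x ⟨hx, rfl⟩
  rw [mem_support, actFun_eq_sum hf] at hx
  obtain ⟨g, hg, hne⟩ := Finset.exists_ne_zero_of_sum_ne_zero hx
  have hg := (Finite.mem_toFinset _).1 hg
  exact mem_biUnion hg ⟨S.act n (D.inv g) x,
    ⟨right_ne_zero_of_mul hne, anchor_inv_act hD hS hg.2⟩, act_inv_act hD hS hg.2⟩

lemma epsFun_mem_chain (f : G → ℤ) {a : S.X n → ℤ} (ha : a ∈ S.Chain n) :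
    S.epsFun n f a ∈ S.Chain n := fun u =>
  (ha u).subset (inter_subset_inter_left _ fun _ => right_ne_zero_of_mul)

lemma rel_le_chain (hD : D.IsAmpleGroupoid) (hS : S.IsEtale) (n : ℕ) :
    S.rel n ≤ S.Chain n := by
  have := hD.t2
  refine (AddSubgroup.closure_le _).2 ?_
  rintro _ ⟨f, a, hf, ha, rfl⟩
  have ha := ccZ_le_chain hD hS n ha
  exact (S.Chain n).sub_mem
    (actFun_mem_chain hD hS (ccZ_le_fiberwiseFinite hD.etale_range hf) ha) (epsFun_mem_chain f ha)

/-- The operators on chains that descend to the coinvariants: they preserve `ℤ[X_n]` and the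
relations defining its coinvariants. -/
def admissible (S T : D.SSG) (n m : ℕ) : AddSubgroup (S.Chain n →+ T.Chain m) where
  carrier := {K |
    (∀ a : S.Chain n, (a : S.X n → ℤ) ∈ ccZ (S.X n) → (K a : T.X m → ℤ) ∈ ccZ (T.X m)) ∧
    ∀ a : S.Chain n, (a : S.X n → ℤ) ∈ S.rel n → (K a : T.X m → ℤ) ∈ T.rel m}
  zero_mem' := ⟨fun _ _ => (ccZSub _).zero_mem, fun _ _ => (T.rel m).zero_mem⟩
  add_mem' hK hL := ⟨fun a ha => (ccZSub _).add_mem (hK.1 a ha) (hL.1 a ha),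
    fun a ha => (T.rel m).add_mem (hK.2 a ha) (hL.2 a ha)⟩
  neg_mem' hK := ⟨fun a ha => (ccZSub _).neg_mem (hK.1 a ha),
    fun a ha => (T.rel m).neg_mem (hK.2 a ha)⟩

lemma comp_mem_admissible {K : T.Chain m →+ R.Chain l} (hK : K ∈ admissible T R m l)
    {L : S.Chain n →+ T.Chain m} (hL : L ∈ admissible S T n m) :
    K.comp L ∈ admissible S R n l :=
  ⟨fun a ha => hK.1 _ (hL.1 a ha), fun a ha => hK.2 _ (hL.2 a ha)⟩

lemma mem_admissible_of_comm (hD : D.IsAmpleGroupoid) (hS : S.IsEtale)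
    {K : S.Chain n →+ T.Chain m}
    (hcc : ∀ a : S.Chain n, (a : S.X n → ℤ) ∈ ccZ (S.X n) → (K a : T.X m → ℤ) ∈ ccZ (T.X m))
    (hact : ∀ f ∈ ccZ G, ∀ a b : S.Chain n, (b : S.X n → ℤ) = S.actFun n f a →
      (K b : T.X m → ℤ) = T.actFun m f (K a))
    (heps : ∀ f ∈ ccZ G, ∀ a b : S.Chain n, (b : S.X n → ℤ) = S.epsFun n f a →
      (K b : T.X m → ℤ) = T.epsFun m f (K a)) :
    K ∈ admissible S T n m := by
  have := hD.t2
  have hle : S.rel n ≤ (((T.rel m).comap (T.Chain m).subtype).comap K).map (S.Chain n).subtype := by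
    refine (AddSubgroup.closure_le _).2 ?_
    rintro _ ⟨f, a, hf, ha, rfl⟩
    lift a to S.Chain n using ccZ_le_chain hD hS n ha
    let b : S.Chain n := ⟨S.actFun n f a,
      actFun_mem_chain hD hS (ccZ_le_fiberwiseFinite hD.etale_range hf) a.2⟩
    let b' : S.Chain n := ⟨S.epsFun n f a, epsFun_mem_chain f a.2⟩
    refine ⟨b - b', ?_, rfl⟩
    have hK : (K (b - b') : T.X m → ℤ) = T.actFun m f (K a) - T.epsFun m f (K a) := by
      rw [map_sub, AddSubgroup.coe_sub, hact f hf a b rfl, heps f hf a b' rfl]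
    exact AddSubgroup.subset_closure ⟨f, K a, hf, hcc a ha, hK⟩
  refine ⟨hcc, fun a ha => ?_⟩
  obtain ⟨b, hb, hba⟩ := hle ha
  obtain rfl : b = a := Subtype.ext hba
  exact hb

/-- Continuous equivariant maps over the units. -/
structure IsGMap (S T : D.SSG) (φ : S.X n → T.X m) : Prop where
  continuous : Continuous φ
  anchor_comm : ∀ x, T.anchor m (φ x) = S.anchor n x
  act_comm : ∀ g x, D.source g = S.anchor n x → φ (S.act n g x) = T.act m g (φ x)

lemma IsGMap.isLocalHomeomorph {φ : S.X n → T.X m} (hφ : IsGMap S T φ) (hS : S.IsEtale)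
    (hT : T.IsEtale) : IsLocalHomeomorph φ :=
  .of_comp ((funext hφ.anchor_comm : T.anchor m ∘ φ = S.anchor n) ▸ hS.etale_anchor n)
    (hT.etale_anchor m) hφ.continuous

lemma IsGMap.bijOn_fiber {φ : S.X n → T.X m} (hφ : IsGMap S T φ) (hD : D.IsAmpleGroupoid)
    (hS : S.IsEtale) (hT : T.IsEtale) {g : G} {y : T.X m} (hg : D.range g = T.anchor m y) :
    BijOn (S.act n (D.inv g)) (φ ⁻¹' {y}) (φ ⁻¹' {T.act m (D.inv g) y}) := by
  have hanchor (x : S.X n) (hx : x ∈ φ ⁻¹' {y}) : D.range g = S.anchor n x := by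
    rw [← hφ.anchor_comm, show φ x = y from hx, hg]
  refine ⟨fun x hx => ?_, fun x hx x' hx' h => ?_, fun x hx => ⟨S.act n g x, ?_, ?_⟩⟩
  · rw [mem_preimage, hφ.act_comm _ _ ((hD.source_inv g).trans (hanchor x hx)),
      show φ x = y from hx]
    rfl
  · rw [← act_inv_act hD hS (hanchor x hx), h, act_inv_act hD hS (hanchor x' hx')]
  all_goals
    have hsource : D.source g = S.anchor n x := by
      rw [← hφ.anchor_comm, show φ x = _ from hx, anchor_inv_act hD hT hg]
  · rw [mem_preimage, hφ.act_comm g x hsource, show φ x = _ from hx, act_inv_act hD hT hg]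
    rfl
  · exact hS.inv_act n g x hsource

lemma IsGMap.pushf_actFun {φ : S.X n → T.X m} (hφ : IsGMap S T φ) (hD : D.IsAmpleGroupoid)
    (hS : S.IsEtale) (hT : T.IsEtale) {f : G → ℤ} (hf : f ∈ fiberwiseFinite D.range)
    {a : S.X n → ℤ} (ha : a ∈ S.Chain n) :
    pushf φ (S.actFun n f a) = T.actFun m f (pushf φ a) := by
  funext y
  have hfiber (g : G) (hg : g ∈ (hf (T.anchor m y)).toFinset) :=
    hφ.bijOn_fiber hD hS hT ((Finite.mem_toFinset _).1 hg).2
  have hfinite (g : G) (hg : g ∈ (hf (T.anchor m y)).toFinset) :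
      (support fun x : φ ⁻¹' {y} => f g * a (S.act n (D.inv g) x)).Finite := by
    refine Finite.of_finite_image (f := fun x : φ ⁻¹' {y} => S.act n (D.inv g) x)
      ((finite_fiber_inter_support hφ.anchor_comm ha (T.act m (D.inv g) y)).subset ?_)
      ((hfiber g hg).injOn.comp Subtype.val_injective.injOn fun x _ => x.2)
    rintro _ ⟨x, hx, rfl⟩
    exact ⟨(hfiber g hg).mapsTo x.2, right_ne_zero_of_mul hx⟩
  rw [actFun_eq_sum hf]
  calc pushf φ (S.actFun n f a) y
      = ∑ᶠ x : φ ⁻¹' {y}, S.actFun n f a x := (finsum_set_coe_eq_finsum_mem _).symm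
    _ = ∑ᶠ x : φ ⁻¹' {y}, ∑ g ∈ (hf (T.anchor m y)).toFinset, f g * a (S.act n (D.inv g) x) := by
        refine finsum_congr fun ⟨x, hx⟩ => ?_
        obtain rfl : φ x = y := hx
        simp only [actFun_eq_sum hf, hφ.anchor_comm]
    _ = ∑ g ∈ (hf (T.anchor m y)).toFinset,
          ∑ᶠ x : φ ⁻¹' {y}, f g * a (S.act n (D.inv g) x) := finsum_sum_comm _ _ hfinite
    _ = ∑ g ∈ (hf (T.anchor m y)).toFinset, f g * pushf φ a (T.act m (D.inv g) y) := by
        refine Finset.sum_congr rfl fun g hg => ?_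
        rw [← mul_finsum, finsum_set_coe_eq_finsum_mem (f := fun x => a (S.act n (D.inv g) x)),
          finsum_mem_eq_of_bijOn _ (hfiber g hg) fun _ _ => rfl]
        rfl

lemma IsGMap.pushf_epsFun {φ : S.X n → T.X m} (hφ : IsGMap S T φ) (f : G → ℤ) (a : S.X n → ℤ) :
    pushf φ (S.epsFun n f a) = T.epsFun m f (pushf φ a) := by
  funext y
  refine Eq.trans ?_ (mul_finsum_mem ..).symm
  refine finsum_mem_congr rfl fun x hx => ?_
  rw [epsFun, ← hφ.anchor_comm, show φ x = y from hx]

lemma push_mem_admissible (hD : D.IsAmpleGroupoid) (hS : S.IsEtale) (hT : T.IsEtale)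
    {φ : S.X n → T.X m} (hφ : IsGMap S T φ) :
    push φ hφ.anchor_comm ∈ admissible S T n m := by
  have := hD.t2
  have := hD.prespectralSpace
  have := hS.t2 n
  have := hT.t2 m
  have := prespectralSpace_of_isLocalHomeomorph (hS.etale_anchor n)
  refine mem_admissible_of_comm hD hS
    (fun a ha => pushf_mem_ccZ (hφ.isLocalHomeomorph hS hT) ha) (fun f hf a b hb => ?_)
    fun f _ a b hb => ?_
  · rw [coe_push, hb, coe_push,
      hφ.pushf_actFun hD hS hT (ccZ_le_fiberwiseFinite hD.etale_range hf) a.2]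
  · rw [coe_push, hb, coe_push, hφ.pushf_epsFun]

lemma pull_mem_admissible (hD : D.IsAmpleGroupoid) (hT : T.IsEtale)
    {φ : S.X n → T.X m} (hφ : IsGMap S T φ) (hemb : Topology.IsClosedEmbedding φ) :
    pull φ hφ.anchor_comm hemb.injective ∈ admissible T S m n := by
  refine mem_admissible_of_comm hD hT (fun a ha => comp_mem_ccZ_of_isClosedEmbedding hemb ha)
    (fun f _ a b hb => ?_) fun f _ a b hb => ?_
  · refine (congrArg (· ∘ φ) hb).trans (funext fun x => finsum_congr fun g => ?_)
    rw [hφ.anchor_comm]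
    refine if_ctx_congr Iff.rfl (fun hg => ?_) fun _ => rfl
    change f g * a.1 _ = f g * a.1 _
    rw [hφ.act_comm _ _ ((hD.source_inv g).trans hg)]
  · refine (congrArg (· ∘ φ) hb).trans (funext fun x => ?_)
    change _ * a.1 (φ x) = _ * a.1 (φ x)
    rw [hφ.anchor_comm]

lemma restrictTo_mem_admissible (hD : D.IsAmpleGroupoid) (hS : S.IsEtale) {U : Set (S.X n)}
    (hU : IsClopen U)
    (hact : ∀ g x, D.source g = S.anchor n x → (S.act n g x ∈ U ↔ x ∈ U)) :
    restrictTo (S.anchor n) U ∈ admissible S S n n := by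
  refine mem_admissible_of_comm hD hS (fun a ha => indicator_mem_ccZ hU ha)
    (fun f _ a b hb => ?_) fun f _ a b hb => ?_
  · rw [coe_restrictTo, hb]
    funext x
    by_cases hx : x ∈ U
    all_goals
      rw [indicator_apply, actFun, actFun]
    · rw [if_pos hx]
      refine finsum_congr fun g => if_ctx_congr Iff.rfl (fun hg => ?_) fun _ => rfl
      rw [coe_restrictTo, indicator_of_mem ((hact _ x ((hD.source_inv g).trans hg)).2 hx)]
    · rw [if_neg hx]
      refine (finsum_eq_zero_of_forall_eq_zero fun g => ite_eq_right_iff.2 fun hg => ?_).symm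
      rw [coe_restrictTo,
        indicator_of_notMem (mt (hact _ x ((hD.source_inv g).trans hg)).1 hx), mul_zero]
  · rw [coe_restrictTo, hb, coe_restrictTo]
    exact funext fun x => indicator_mul_right U _ _

end SSG

end GroupoidData

namespace GroupoidData.SSG

open fiberwiseFinite

variable {G : Type u} [TopologicalSpace G] {D : GroupoidData G} {S T : D.SSG} {n : ℕ}

/-- The boundary map `∑ (-1)^i (∂^i)_*` on chains; on `ℤ[X_{n+1}]` it is `SSG.bdry`. -/
def boundary (hS : S.IsEtale) (n : ℕ) : S.Chain (n + 1) →+ S.Chain n :=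
  ∑ i : Fin (n + 2), (-1 : ℤ) ^ (i : ℕ) • push (S.face n i) (hS.anchor_face n i)

lemma coe_boundary (hS : S.IsEtale) (a : S.Chain (n + 1)) :
    (boundary hS n a : S.X n → ℤ) = S.bdry n a := by
  ext y
  simp only [boundary, AddMonoidHom.finsetSum_apply, AddMonoidHom.smul_apply,
    AddSubgroup.val_finsetSum, AddSubgroup.coe_zsmul, Finset.sum_apply, Pi.smul_apply,
    coe_push, smul_eq_mul]
  rfl

lemma cycles_le_ccZ : ∀ n : ℕ, S.cycles n ≤ ccZSub (S.X n)
  | 0 => le_rfl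
  | _ + 1 => (AddSubgroup.closure_le _).2 fun _ ha => ha.1

lemma mem_cycles_succ_iff (hD : D.IsAmpleGroupoid) (hS : S.IsEtale) {a : S.X (n + 1) → ℤ} :
    a ∈ S.cycles (n + 1) ↔ a ∈ ccZ (S.X (n + 1)) ∧ S.bdry n a ∈ S.rel n := by
  refine ⟨fun ha => ⟨cycles_le_ccZ _ ha, ?_⟩, fun ha => AddSubgroup.subset_closure ha⟩
  have hle : S.cycles (n + 1) ≤
      (((S.rel n).comap (S.Chain n).subtype).comap (boundary hS n)).map
        (S.Chain (n + 1)).subtype := by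
    refine (AddSubgroup.closure_le _).2 fun b ⟨hcc, hrel⟩ => ?_
    lift b to S.Chain (n + 1) using ccZ_le_chain hD hS _ hcc
    rw [← coe_boundary hS] at hrel
    exact ⟨b, hrel, rfl⟩
  obtain ⟨b, hb, rfl⟩ := hle ha
  exact coe_boundary hS b ▸ hb

lemma mem_bdries_iff (hD : D.IsAmpleGroupoid) (hS : S.IsEtale) {a : S.X n → ℤ} :
    a ∈ S.bdries n ↔ ∃ r ∈ S.rel n, ∃ b ∈ ccZ (S.X (n + 1)), r + S.bdry n b = a := by
  have hclosure : AddSubgroup.closure {c | ∃ b ∈ ccZ (S.X (n + 1)), S.bdry n b = c} =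
      (((ccZSub _).comap (S.Chain (n + 1)).subtype).map (boundary hS n)).map
        (S.Chain n).subtype := by
    refine (AddSubgroup.closure_eq_of_le _ ?_ ?_)
    · rintro _ ⟨b, hb, rfl⟩
      lift b to S.Chain (n + 1) using ccZ_le_chain hD hS _ hb
      exact ⟨boundary hS n b, ⟨b, hb, rfl⟩, coe_boundary hS b⟩
    · rintro _ ⟨_, ⟨b, hb, rfl⟩, rfl⟩
      exact AddSubgroup.subset_closure ⟨b, hb, (coe_boundary hS b).symm⟩
  rw [bdries, hclosure, AddSubgroup.mem_sup]
  refine exists_congr fun r => and_congr_right fun _ => ⟨?_, ?_⟩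
  · rintro ⟨_, ⟨_, ⟨b, hb, rfl⟩, rfl⟩, rfl⟩
    exact ⟨b, hb, congrArg (r + ·) (coe_boundary hS b).symm⟩
  · rintro ⟨b, hb, rfl⟩
    lift b to S.Chain (n + 1) using ccZ_le_chain hD hS _ hb
    exact ⟨_, ⟨boundary hS n b, ⟨b, hb, rfl⟩, rfl⟩, congrArg (r + ·) (coe_boundary hS b)⟩

/-- Morphisms between the complexes of coinvariants, represented by operators on chains. -/
structure IsChainMap (hS : S.IsEtale) (hT : T.IsEtale) (K : ∀ n, S.Chain n →+ T.Chain n) :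
    Prop where
  mem_admissible : ∀ n, K n ∈ admissible S T n n
  boundary_comm : ∀ n a, boundary hT n (K (n + 1) a) = K n (boundary hS n a)

namespace IsChainMap

variable {hS : S.IsEtale} {hT : T.IsEtale} {K : ∀ n, S.Chain n →+ T.Chain n}

lemma map_mem_cycles (hK : IsChainMap hS hT K) (hD : D.IsAmpleGroupoid) {a : S.Chain n}
    (ha : (a : S.X n → ℤ) ∈ S.cycles n) : (K n a : T.X n → ℤ) ∈ T.cycles n := by
  cases n with
  | zero => exact (hK.mem_admissible 0).1 a ha
  | succ n =>
    obtain ⟨hcc, hrel⟩ := (mem_cycles_succ_iff hD hS).1 ha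
    refine (mem_cycles_succ_iff hD hT).2 ⟨(hK.mem_admissible _).1 a hcc, ?_⟩
    rw [← coe_boundary hT, hK.boundary_comm]
    exact (hK.mem_admissible n).2 _ (coe_boundary hS a ▸ hrel)

lemma map_mem_bdries (hK : IsChainMap hS hT K) (hD : D.IsAmpleGroupoid) {a : S.Chain n}
    (ha : (a : S.X n → ℤ) ∈ S.bdries n) : (K n a : T.X n → ℤ) ∈ T.bdries n := by
  obtain ⟨r, hr, b, hb, hrb⟩ := (mem_bdries_iff hD hS).1 ha
  lift r to S.Chain n using rel_le_chain hD hS n hr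
  lift b to S.Chain (n + 1) using ccZ_le_chain hD hS _ hb
  obtain rfl : r + boundary hS n b = a := by
    rw [← coe_boundary hS] at hrb
    exact Subtype.ext hrb
  refine (mem_bdries_iff hD hT).2 ⟨K n r, (hK.mem_admissible n).2 r hr, K (n + 1) b,
    (hK.mem_admissible (n + 1)).1 b hb, ?_⟩
  rw [map_add, ← hK.boundary_comm, ← coe_boundary hT]
  rfl

/-- The map induced on cycles by a chain map. -/
def cyclesMap (hK : IsChainMap hS hT K) (hD : D.IsAmpleGroupoid) (n : ℕ) :
    S.cycles n →+ T.cycles n :=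
  (((T.Chain n).subtype.comp (K n)).comp (AddSubgroup.inclusion
    ((cycles_le_ccZ n).trans (ccZ_le_chain hD hS n)))).codRestrict (T.cycles n)
    fun a => hK.map_mem_cycles hD a.2

/-- The map induced on homology by a chain map. -/
def homologyMap (hK : IsChainMap hS hT K) (hD : D.IsAmpleGroupoid) (n : ℕ) :
    S.homology n →+ T.homology n :=
  QuotientAddGroup.map _ _ (hK.cyclesMap hD n) fun a ha =>
    hK.map_mem_bdries hD (a := ⟨a.1, ccZ_le_chain hD hS n (cycles_le_ccZ n a.2)⟩) ha

lemma homologyMap_cls (hK : IsChainMap hS hT K) (hD : D.IsAmpleGroupoid) {a : S.Chain n}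
    (ha : (a : S.X n → ℤ) ∈ S.cycles n) :
    hK.homologyMap hD n (S.cls a ha) = T.cls (K n a) (hK.map_mem_cycles hD ha) :=
  rfl

end IsChainMap

lemma exists_cls_eq (hD : D.IsAmpleGroupoid) (hS : S.IsEtale) (x : S.homology n) :
    ∃ (a : S.Chain n) (ha : (a : S.X n → ℤ) ∈ S.cycles n), S.cls a ha = x := by
  obtain ⟨a, rfl⟩ := QuotientAddGroup.mk_surjective x
  exact ⟨⟨a, ccZ_le_chain hD hS n (cycles_le_ccZ n a.2)⟩, a.2, rfl⟩

lemma cls_eq_cls {a b : S.X n → ℤ} {ha : a ∈ S.cycles n} {hb : b ∈ S.cycles n}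
    (hab : b - a ∈ S.bdries n) : S.cls a ha = S.cls b hb :=
  QuotientAddGroup.eq.2 <| show -a + b ∈ S.bdries n from (neg_add_eq_sub a b).symm ▸ hab

lemma sub_mem_bdries_of_homotopy (hD : D.IsAmpleGroupoid) (hS : S.IsEtale)
    {K : ∀ n, S.Chain n →+ S.Chain n} {h : ∀ n, S.Chain n →+ S.Chain (n + 1)}
    (hh : ∀ n, h n ∈ admissible S S n (n + 1)) (hzero : ∀ a, a - K 0 a = boundary hS 0 (h 0 a))
    (hsucc : ∀ n a, a - K (n + 1) a = boundary hS (n + 1) (h (n + 1) a) + h n (boundary hS n a))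
    {a : S.Chain n} (ha : (a : S.X n → ℤ) ∈ S.cycles n) :
    (a - K n a : S.X n → ℤ) ∈ S.bdries n := by
  rw [← AddSubgroup.coe_sub]
  refine (mem_bdries_iff hD hS).2 ?_
  cases n with
  | zero =>
    refine ⟨0, zero_mem _, h 0 a, (hh 0).1 a ha, ?_⟩
    rw [zero_add, ← coe_boundary hS, hzero]
  | succ n =>
    obtain ⟨hcc, hrel⟩ := (mem_cycles_succ_iff hD hS).1 ha
    refine ⟨h n (boundary hS n a), (hh n).2 _ (coe_boundary hS a ▸ hrel), h (n + 1) a,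
      (hh _).1 a hcc, ?_⟩
    rw [← coe_boundary hS, hsucc]
    exact add_comm _ _

/-- The isomorphism on homology induced by a deformation retraction of complexes. -/
def homologyEquivOfRetraction (hD : D.IsAmpleGroupoid) {hS : S.IsEtale} {hT : T.IsEtale}
    {ι : ∀ n, S.Chain n →+ T.Chain n} {ρ : ∀ n, T.Chain n →+ S.Chain n}
    (hι : IsChainMap hS hT ι) (hρ : IsChainMap hT hS ρ) (hρι : ∀ n a, ρ n (ι n a) = a)
    (hιρ : ∀ n (b : T.Chain n), (b : T.X n → ℤ) ∈ T.cycles n →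
      (b - ι n (ρ n b) : T.X n → ℤ) ∈ T.bdries n) (n : ℕ) :
    S.homology n ≃+ T.homology n where
  __ := hι.homologyMap hD n
  invFun := hρ.homologyMap hD n
  left_inv x := by
    obtain ⟨a, ha, rfl⟩ := exists_cls_eq hD hS x
    refine cls_eq_cls (ha := hρ.map_mem_cycles hD (hι.map_mem_cycles hD ha)) ?_
    rw [hρι, sub_self]
    exact zero_mem _
  right_inv y := by
    obtain ⟨b, hb, rfl⟩ := exists_cls_eq hD hT y
    exact cls_eq_cls (ha := hι.map_mem_cycles hD (hρ.map_mem_cycles hD hb)) (hιρ n b hb)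

end GroupoidData.SSG

/-! ### The nerve of a colouring as an étale space -/

namespace GroupoidData

variable {G : Type u} [TopologicalSpace G] {D : GroupoidData G} {d n m : ℕ}

lemma IsAmpleGroupoid.isOpen_setOf_exists_mul_mem (hD : D.IsAmpleGroupoid) {U V : Set G}
    (hU : IsOpen U) (hV : IsOpen V) :
    IsOpen {g | ∃ h ∈ U, D.source g = D.range h ∧ D.mul g h ∈ V} := by
  refine isOpen_iff_mem_nhds.2 ?_
  rintro g ⟨h, hh, hgh, hV'⟩
  have hnhds := hD.continuous_mul.continuousAt.preimage_mem_nhds (x := ⟨(g, h), hgh⟩)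
    (hV.mem_nhds hV')
  obtain ⟨O, hO, hOV⟩ := mem_nhds_subtype _ _ _ |>.1 hnhds
  obtain ⟨A, hA, B, hB, hAB⟩ := mem_nhds_prod_iff.1 hO
  have hrange : D.range '' (B ∩ U) ∈ nhds (D.source g) :=
    hgh ▸ hD.etale_range.isOpenMap.image_mem_nhds (Filter.inter_mem hB (hU.mem_nhds hh))
  filter_upwards [hA, hD.etale_source.continuous.continuousAt hrange]
  rintro g' hg' ⟨h', ⟨hB', hU'⟩, hgh'⟩
  exact ⟨h', hU', hgh'.symm, hOV (a := ⟨(g', h'), hgh'.symm⟩) (hAB ⟨hg', hB'⟩)⟩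

namespace Colouring

variable {C : D.Colouring d}

instance : TopologicalSpace (C.NerveSp n) := C.nerveTop n

lemma isOpen_setOf_apply_eq_fib {V : Set G} {i : Fin (d + 1)} (hV : IsOpen V)
    (hVi : ∀ g ∈ V, ∃ h ∈ C.sub i, D.range h = D.source g) (j : Fin (n + 1)) :
    IsOpen {x : C.NerveSp n | ∃ g ∈ V, x.1 j = (C.fib i g, i)} := by
  let := C.baseTop
  have hentry : Continuous fun x : C.NerveSp n => x.1 j :=
    (continuous_apply j).comp continuous_induced_dom
  have hopen : IsOpen {p | ∃ g ∈ V, p = (C.fib i g, i)} :=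
    TopologicalSpace.isOpen_generateFrom_of_mem ⟨V, i, hV, hVi, rfl⟩
  exact hopen.preimage hentry

lemma isClopen_setOf_mem_sub (hD : D.IsAmpleGroupoid) (C : D.Colouring d) :
    IsClopen {p : Fin (d + 1) × G | p.2 ∈ C.sub p.1} := by
  have := hD.t2
  have hunion : {p : Fin (d + 1) × G | p.2 ∈ C.sub p.1} = ⋃ i, {i} ×ˢ C.sub i := by
    ext p
    simp
  rw [hunion]
  exact ⟨isClosed_iUnion_of_finite fun i => isClosed_singleton.prod (C.isCompact i).isClosed,
    isOpen_iUnion fun i => (isOpen_discrete {i}).prod (C.isOpen i)⟩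

lemma mem_fib_self (hD : D.IsAmpleGroupoid) {i : Fin (d + 1)} {g : G}
    (hg : D.source g ∈ C.sub i) : g ∈ C.fib i g :=
  ⟨D.source g, hg, hD.range_unit _ (hD.source_mem g), (hD.mul_unit g).symm⟩

lemma range_eq_of_mem_fib (hD : D.IsAmpleGroupoid) {i : Fin (d + 1)} {g w : G}
    (hw : w ∈ C.fib i g) : D.range w = D.range g := by
  obtain ⟨h, -, hgh, rfl⟩ := hw
  exact hD.range_mul _ _ hgh.symm

lemma source_mem_of_mem_fib (hD : D.IsAmpleGroupoid) {i : Fin (d + 1)} {g w : G}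
    (hw : w ∈ C.fib i g) : D.source w ∈ C.sub i := by
  obtain ⟨h, hh, hgh, rfl⟩ := hw
  exact hD.source_mul _ _ hgh.symm ▸ C.source_mem i h hh

lemma fib_eq_of_mem_fib (hD : D.IsAmpleGroupoid) {i : Fin (d + 1)} {g w : G}
    (hw : w ∈ C.fib i g) : C.fib i w = C.fib i g := by
  obtain ⟨h, hh, hgh, rfl⟩ := hw
  have hsource := hD.source_mul _ _ hgh.symm
  ext v
  constructor
  · rintro ⟨k, hk, hkw, rfl⟩
    have hhk : D.source h = D.range k := hsource.symm.trans hkw.symm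
    exact ⟨D.mul h k, C.mul_mem i _ _ hh hk hhk, (hD.range_mul _ _ hhk).trans hgh,
      hD.mul_assoc _ _ _ hgh.symm hhk⟩
  · rintro ⟨k, hk, hkg, rfl⟩
    have hhk : D.range h = D.range k := hgh.trans hkg.symm
    have hinv : D.source (D.inv h) = D.range k := (hD.source_inv h).trans hhk
    have hrange : D.range (D.mul (D.inv h) k) = D.source h :=
      (hD.range_mul _ _ hinv).trans (hD.range_inv h)
    refine ⟨D.mul (D.inv h) k, C.mul_mem i _ _ (C.inv_mem i h hh) hk hinv,
      hrange.trans hsource.symm, ?_⟩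
    rw [hD.mul_assoc _ _ _ hgh.symm hrange.symm, hD.mul_inv_cancel_left hhk]

lemma fib_eq_fib_iff (hD : D.IsAmpleGroupoid) {i : Fin (d + 1)} {g w : G}
    (hw : D.source w ∈ C.sub i) :
    C.fib i g = C.fib i w ↔ D.range g = D.range w ∧ D.mul (D.inv g) w ∈ C.sub i := by
  constructor
  · intro h
    obtain ⟨k, hk, hkg, rfl⟩ := h ▸ mem_fib_self hD hw
    rw [hD.inv_mul_cancel_left hkg.symm]
    exact ⟨(hD.range_mul _ _ hkg.symm).symm, hk⟩
  · rintro ⟨hgw, hmem⟩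
    refine (fib_eq_of_mem_fib hD ⟨_, hmem, ?_, (hD.mul_inv_cancel_left hgw).symm⟩).symm
    rw [hD.range_mul _ _ ((hD.source_inv g).trans hgw), hD.range_inv]

lemma trans_fib (hD : D.IsAmpleGroupoid) {i : Fin (d + 1)} {g w : G}
    (hgw : D.source g = D.range w) : trans (D := D) g (C.fib i w) = C.fib i (D.mul g w) := by
  ext v
  simp only [trans, fib, mem_ofPred_eq, hD.source_mul _ _ hgw]
  constructor
  · rintro ⟨_, ⟨h, hh, hwh, rfl⟩, -, rfl⟩
    exact ⟨h, hh, hwh, (hD.mul_assoc _ _ _ hgw hwh.symm).symm⟩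
  · rintro ⟨h, hh, hwh, rfl⟩
    exact ⟨_, ⟨h, hh, hwh, rfl⟩, hgw.trans (hD.range_mul _ _ hwh.symm).symm,
      hD.mul_assoc _ _ _ hgw hwh.symm⟩

/-- A simplex of the nerve together with a point `w` of its intersection; the simplex is
determined by its colours `c` and `w`, its entries being the sets `w G_{c j}`. -/
def PointedSimplex (C : D.Colouring d) (n : ℕ) : Type u :=
  {p : (Fin (n + 1) → Fin (d + 1)) × G // ∀ j, D.source p.2 ∈ C.sub (p.1 j)}

namespace PointedSimplex

instance : TopologicalSpace (C.PointedSimplex n) := instTopologicalSpaceSubtype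

/-- The simplex underlying a pointed simplex. -/
def simplex (hD : D.IsAmpleGroupoid) (p : C.PointedSimplex n) : C.NerveSp n :=
  ⟨fun j => (C.fib (p.1.1 j) p.1.2, p.1.1 j),
    fun j => ⟨p.1.2, ⟨_, p.2 j, hD.range_unit _ (hD.source_mem _)⟩, rfl⟩,
    p.1.2, mem_iInter.2 fun j => mem_fib_self hD (p.2 j)⟩

lemma exists_simplex_eq_of_mem (hD : D.IsAmpleGroupoid) {x : C.NerveSp n} {w : G}
    (hw : w ∈ ⋂ j, (x.1 j).1) :
    ∃ p : C.PointedSimplex n, p.1 = (fun j => (x.1 j).2, w) ∧ simplex hD p = x := by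
  have hfib (j : Fin (n + 1)) :
      D.source w ∈ C.sub (x.1 j).2 ∧ C.fib (x.1 j).2 w = (x.1 j).1 := by
    obtain ⟨g, -, hg⟩ := x.2.1 j
    have hwg := hg ▸ mem_iInter.1 hw j
    exact ⟨source_mem_of_mem_fib hD hwg, (fib_eq_of_mem_fib hD hwg).trans hg.symm⟩
  exact ⟨⟨(fun j => (x.1 j).2, w), fun j => (hfib j).1⟩, rfl,
    Subtype.ext <| funext fun j => Prod.ext (hfib j).2 rfl⟩

lemma surjective_simplex (hD : D.IsAmpleGroupoid) :
    Surjective (simplex hD : C.PointedSimplex n → C.NerveSp n) := fun x =>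
  have ⟨_, hw⟩ := x.2.2
  have ⟨p, _, hp⟩ := exists_simplex_eq_of_mem hD hw
  ⟨p, hp⟩

lemma simplex_eq_simplex_iff (hD : D.IsAmpleGroupoid) {p q : C.PointedSimplex n} :
    simplex hD p = simplex hD q ↔ (p.1.1 = q.1.1 ∧ D.range p.1.2 = D.range q.1.2) ∧
      ∀ j, D.mul (D.inv p.1.2) q.1.2 ∈ C.sub (q.1.1 j) := by
  obtain ⟨⟨c, w⟩, hp⟩ := p
  obtain ⟨⟨c', w'⟩, hq⟩ := q
  refine Subtype.ext_iff.trans <| funext_iff.trans ⟨fun h => ?_, ?_⟩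
  · obtain rfl : c = c' := funext fun j => congrArg Prod.snd (h j)
    have hfib (j) := (fib_eq_fib_iff hD (hq j)).1 (congrArg Prod.fst (h j))
    exact ⟨⟨rfl, (hfib 0).1⟩, fun j => (hfib j).2⟩
  · rintro ⟨⟨rfl, hrange⟩, hmem⟩ j
    exact Prod.ext ((fib_eq_fib_iff hD (hq j)).2 ⟨hrange, hmem j⟩) rfl

lemma continuous_colour : Continuous fun p : C.PointedSimplex n => p.1.1 :=
  continuous_fst.comp continuous_subtype_val

lemma continuous_point : Continuous fun p : C.PointedSimplex n => p.1.2 :=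
  continuous_snd.comp continuous_subtype_val

lemma continuous_simplex (hD : D.IsAmpleGroupoid) :
    Continuous (simplex hD : C.PointedSimplex n → C.NerveSp n) := by
  refine continuous_induced_rng.2 (@continuous_pi _ _ _ _ (fun _ => C.baseTop) _ fun j => ?_)
  refine continuous_generateFrom_iff.2 ?_
  rintro _ ⟨V, i, hV, hVi, rfl⟩
  have hpreimage : (fun p : C.PointedSimplex n => (simplex hD p).1 j) ⁻¹'
      {u | ∃ g ∈ V, u = (C.fib i g, i)} = (fun p => p.1.1 j) ⁻¹' {i} ∩
        (fun p => p.1.2) ⁻¹' {w | ∃ h ∈ C.sub i, D.source w = D.range h ∧ D.mul w h ∈ V} := by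
    ext p
    constructor
    · rintro ⟨g, hg, hpg⟩
      obtain ⟨hfib, rfl⟩ := Prod.mk.inj hpg
      obtain ⟨k, hk, hkg⟩ := hVi g hg
      obtain ⟨h, hh, hwh, rfl⟩ := hfib ▸ mem_fib_self hD (hkg ▸ C.range_mem _ k hk)
      exact ⟨rfl, h, hh, hwh.symm, hg⟩
    · rintro ⟨rfl, h, hh, hwh, hV⟩
      exact ⟨_, hV, Prod.ext (fib_eq_of_mem_fib hD ⟨h, hh, hwh.symm, rfl⟩).symm rfl⟩
  have hcolour : Continuous fun p : C.PointedSimplex n => p.1.1 j :=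
    (continuous_apply j).comp continuous_colour
  exact hpreimage ▸ ((isOpen_discrete {i}).preimage hcolour).inter
    ((hD.isOpen_setOf_exists_mul_mem (C.isOpen i) hV).preimage continuous_point)

lemma isOpen_setOf_source_mem (hD : D.IsAmpleGroupoid) (C : D.Colouring d) (n : ℕ) :
    IsOpen {p : (Fin (n + 1) → Fin (d + 1)) × G | ∀ j, D.source p.2 ∈ C.sub (p.1 j)} := by
  rw [Set.ofPred_forall]
  refine isOpen_iInter_of_finite fun j => (isClopen_setOf_mem_sub hD C).isOpen.preimage
    (f := fun p : (Fin (n + 1) → Fin (d + 1)) × G => (p.1 j, D.source p.2)) ?_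
  exact ((continuous_apply j).comp continuous_fst).prodMk
    (hD.etale_source.continuous.comp continuous_snd)

lemma exists_isBisection_of_isOpen (hD : D.IsAmpleGroupoid) {O : Set (C.PointedSimplex n)}
    (hO : IsOpen O) {p : C.PointedSimplex n} (hp : p ∈ O) :
    ∃ W : Set G, IsOpen W ∧ D.IsBisection W ∧ p.1.2 ∈ W ∧
      ∀ w ∈ W, ∃ q ∈ O, q.1 = (p.1.1, w) := by
  have hopen : IsOpen ((fun w => (p.1.1, w)) ⁻¹' (Subtype.val '' O)) :=
    ((isOpen_setOf_source_mem hD C n).isOpenMap_subtype_val O hO).preimage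
      (continuous_const.prodMk continuous_id)
  obtain ⟨W, hpW, hWO, hW, -, hbisection⟩ := hD.ample p.1.2 _ hopen ⟨p, hp, rfl⟩
  exact ⟨W, hW, hbisection, hpW, hWO⟩

lemma isOpenMap_simplex (hD : D.IsAmpleGroupoid) :
    IsOpenMap (simplex hD : C.PointedSimplex n → C.NerveSp n) := by
  refine fun O hO => isOpen_iff_forall_mem_open.2 ?_
  rintro _ ⟨p, hp, rfl⟩
  obtain ⟨W, hW, hbisection, hpW, hWO⟩ := exists_isBisection_of_isOpen hD hO hp
  refine ⟨{x | ∀ j, ∃ g ∈ W, x.1 j = (C.fib (p.1.1 j) g, p.1.1 j)}, fun x hx => ?_, ?_,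
    fun j => ⟨p.1.2, hpW, rfl⟩⟩
  · -- The entries of `x` are `g_j G_{c j}` with `g_j` in the bisection `W`, and all `g_j` have the
    -- same range, so they coincide.
    choose g hgW hxg using hx
    obtain ⟨w, hw⟩ := x.2.2
    have hrange (j : Fin (n + 1)) : D.range w = D.range (g j) :=
      range_eq_of_mem_fib hD (congrArg Prod.fst (hxg j) ▸ mem_iInter.1 hw j)
    have hconst (j : Fin (n + 1)) : g j = g 0 :=
      hbisection.2 (hgW j) (hgW 0) ((hrange j).symm.trans (hrange 0))
    obtain ⟨q, hqO, hq⟩ := hWO _ (hgW 0)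
    refine ⟨q, hqO, Subtype.ext <| funext fun j => ?_⟩
    rw [hxg, hconst j]
    exact congrArg (fun v => (C.fib (v.1 j) v.2, v.1 j)) hq
  · rw [Set.ofPred_forall]
    refine isOpen_iInter_of_finite fun j => isOpen_setOf_apply_eq_fib hW (fun g hg => ?_) j
    obtain ⟨q, -, hq⟩ := hWO g hg
    exact ⟨D.source g, by simpa only [hq] using q.2 j, hD.range_unit _ (hD.source_mem g)⟩

lemma isOpenQuotientMap_simplex (hD : D.IsAmpleGroupoid) :
    IsOpenQuotientMap (simplex hD : C.PointedSimplex n → C.NerveSp n) :=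
  ⟨surjective_simplex hD, continuous_simplex hD, isOpenMap_simplex hD⟩

end PointedSimplex

end Colouring

end GroupoidData

namespace GroupoidData.Colouring

open SSG PointedSimplex

variable {G : Type u} [TopologicalSpace G] {D : GroupoidData G} {d n m : ℕ} {C : D.Colouring d}

lemma anchor_eq_range (hD : D.IsAmpleGroupoid) {x : C.NerveSp n} {w : G}
    (hw : w ∈ ⋂ j, (x.1 j).1) : C.nerveSSG.anchor n x = D.range w := by
  obtain ⟨g, -, hg⟩ := x.2.1 0
  have hrange (v : G) (hv : v ∈ ⋂ j, (x.1 j).1) : D.range v = D.range g :=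
    range_eq_of_mem_fib hD (hg ▸ mem_iInter.1 hv 0)
  exact (hrange _ x.2.2.some_mem).trans (hrange w hw).symm

lemma PointedSimplex.mem_iInter_simplex (hD : D.IsAmpleGroupoid) (p : C.PointedSimplex n) :
    p.1.2 ∈ ⋂ j, ((simplex hD p).1 j).1 :=
  mem_iInter.2 fun j => mem_fib_self hD (p.2 j)

lemma PointedSimplex.anchor_simplex (hD : D.IsAmpleGroupoid) (p : C.PointedSimplex n) :
    C.nerveSSG.anchor n (simplex hD p) = D.range p.1.2 :=
  anchor_eq_range hD (mem_iInter_simplex hD p)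

lemma continuous_anchor (hD : D.IsAmpleGroupoid) (n : ℕ) :
    Continuous (C.nerveSSG.anchor n) :=
  (isOpenQuotientMap_simplex hD).continuous_comp_iff.1 <|
    (hD.etale_range.continuous.comp continuous_point).congr fun p => (anchor_simplex hD p).symm

lemma isOpenMap_anchor (hD : D.IsAmpleGroupoid) (n : ℕ) :
    IsOpenMap (C.nerveSSG.anchor n) := by
  refine (isOpenQuotientMap_simplex hD).isOpenMap_iff.2 ?_
  have hcomp : (fun p : C.PointedSimplex n => D.range p.1.2) = C.nerveSSG.anchor n ∘ simplex hD :=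
    (funext (anchor_simplex hD)).symm
  exact hcomp ▸ hD.etale_range.isOpenMap.comp
    (isOpenMap_snd.comp (isOpen_setOf_source_mem hD C n).isOpenMap_subtype_val)

lemma exists_isOpen_injOn_anchor (hD : D.IsAmpleGroupoid) (x : C.NerveSp n) :
    ∃ U : Set (C.NerveSp n), IsOpen U ∧ x ∈ U ∧ InjOn (C.nerveSSG.anchor n) U := by
  obtain ⟨p, rfl⟩ := surjective_simplex hD x
  obtain ⟨W, hW, hbisection, hpW, -⟩ := exists_isBisection_of_isOpen hD isOpen_univ (mem_univ p)
  have hopen : IsOpen {q : C.PointedSimplex n | q.1.1 = p.1.1 ∧ q.1.2 ∈ W} :=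
    ((isOpen_discrete {p.1.1}).preimage continuous_colour).inter (hW.preimage continuous_point)
  refine ⟨_, isOpenMap_simplex hD _ hopen, ⟨p, ⟨rfl, hpW⟩, rfl⟩, ?_⟩
  rintro _ ⟨q, ⟨hq, hqW⟩, rfl⟩ _ ⟨q', ⟨hq', hqW'⟩, rfl⟩ h
  rw [anchor_simplex, anchor_simplex] at h
  exact congrArg (simplex hD)
    (Subtype.ext (Prod.ext (hq.trans hq'.symm) (hbisection.2 hqW hqW' h)))

lemma isLocalHomeomorph_anchor (hD : D.IsAmpleGroupoid) (n : ℕ) :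
    IsLocalHomeomorph (C.nerveSSG.anchor n) := by
  refine isLocalHomeomorph_iff_isOpenEmbedding_restrict.2 fun x => ?_
  obtain ⟨U, hU, hxU, hinj⟩ := exists_isOpen_injOn_anchor hD x
  exact ⟨U, hU.mem_nhds hxU, .of_continuous_injective_isOpenMap
    ((continuous_anchor hD n).comp continuous_subtype_val) hinj.injective
    ((isOpenMap_anchor hD n).comp hU.isOpenMap_subtype_val)⟩

lemma t2Space_nerveSp (hD : D.IsAmpleGroupoid) (n : ℕ) : T2Space (C.NerveSp n) := by
  have := hD.t2
  refine (t2Space_iff_of_isOpenQuotientMap (isOpenQuotientMap_simplex hD)).2 ?_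
  let A : Set (C.PointedSimplex n × C.PointedSimplex n) :=
    {P | P.1.1.1 = P.2.1.1 ∧ D.range P.1.1.2 = D.range P.2.1.2}
  have hA : IsClosed A :=
    (isClosed_eq (continuous_colour.comp continuous_fst)
      (continuous_colour.comp continuous_snd)).inter
    (isClosed_eq (hD.etale_range.continuous.comp (continuous_point.comp continuous_fst))
      (hD.etale_range.continuous.comp (continuous_point.comp continuous_snd)))
  have hmul : Continuous fun P : A => D.mul (D.inv P.1.1.1.2) P.1.2.1.2 :=
    hD.continuous_mul.comp <| Continuous.subtype_mk
      ((hD.continuous_inv.comp (continuous_point.comp (continuous_fst.comp continuous_subtype_val))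
        ).prodMk (continuous_point.comp (continuous_snd.comp continuous_subtype_val)))
      fun P => (hD.source_inv _).trans P.2.2
  have hcolour (j : Fin (n + 1)) : Continuous fun P : A => P.1.2.1.1 j :=
    (continuous_apply j).comp
      (continuous_colour.comp (continuous_snd.comp continuous_subtype_val))
  have hclosed := hA.isClosedMap_subtype_val _ <| isClosed_iInter fun j =>
    (isClopen_setOf_mem_sub hD C).isClosed.preimage ((hcolour j).prodMk hmul)
  convert hclosed using 1
  ext P
  simp only [mem_ofPred_eq, simplex_eq_simplex_iff, mem_image, mem_iInter, mem_preimage,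
    Subtype.exists, exists_and_right, exists_eq_right]
  exact ⟨fun h => ⟨h.1, h.2⟩, fun ⟨h, h'⟩ => ⟨h, h'⟩⟩

/-- The colour map of the nerve. -/
def colour (x : C.nerveSSG.X n) : Fin (n + 1) → Fin (d + 1) := fun j => (x.1 j).2

lemma continuous_colour (hD : D.IsAmpleGroupoid) :
    Continuous (colour : C.nerveSSG.X n → Fin (n + 1) → Fin (d + 1)) :=
  (isOpenQuotientMap_simplex hD).continuous_comp_iff.1 PointedSimplex.continuous_colour

lemma apply_eq_apply_of_colour_eq (hD : D.IsAmpleGroupoid) {x : C.nerveSSG.X n} {i j : Fin (n + 1)}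
    (hij : colour x i = colour x j) : x.1 i = x.1 j := by
  obtain ⟨p, rfl⟩ := surjective_simplex hD x
  exact congrArg (fun k => (C.fib k p.1.2, k)) hij

lemma trans_mem_nerveSet (hD : D.IsAmpleGroupoid) {g : G} {x : C.nerveSSG.X n}
    (hg : D.source g = C.nerveSSG.anchor n x) :
    (fun j => (trans (D := D) g (x.1 j).1, (x.1 j).2)) ∈ C.nerveSet n := by
  obtain ⟨p, rfl⟩ := surjective_simplex hD x
  rw [anchor_simplex] at hg
  have hsource : D.source (D.mul g p.1.2) = D.source p.1.2 := hD.source_mul _ _ hg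
  let q : C.PointedSimplex n := ⟨(p.1.1, D.mul g p.1.2), fun j => hsource ▸ p.2 j⟩
  convert (simplex hD q).2 using 2 with j
  exact Prod.ext (trans_fib hD hg) rfl

lemma nerveAct_apply (hD : D.IsAmpleGroupoid) {g : G} {x : C.nerveSSG.X n}
    (hg : D.source g = C.nerveSSG.anchor n x) (j : Fin (n + 1)) :
    (C.nerveSSG.act n g x).1 j = (trans (D := D) g (x.1 j).1, (x.1 j).2) :=
  congrFun (congrArg Subtype.val (dif_pos (trans_mem_nerveSet hD hg))) j

lemma colour_act (hD : D.IsAmpleGroupoid) {g : G} {x : C.nerveSSG.X n}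
    (hg : D.source g = C.nerveSSG.anchor n x) : colour (C.nerveSSG.act n g x) = colour x :=
  funext fun j => (congrArg Prod.snd (nerveAct_apply hD hg j) :)

lemma anchor_act (hD : D.IsAmpleGroupoid) {g : G} {x : C.nerveSSG.X n}
    (hg : D.source g = C.nerveSSG.anchor n x) :
    C.nerveSSG.anchor n (C.nerveSSG.act n g x) = D.range g := by
  obtain ⟨w, hw⟩ := x.2.2
  have hgw : D.source g = D.range w := hg.trans (anchor_eq_range hD hw)
  refine (anchor_eq_range hD (w := D.mul g w) (mem_iInter.2 fun j => ?_)).trans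
    (hD.range_mul _ _ hgw)
  rw [nerveAct_apply hD hg]
  exact ⟨w, mem_iInter.1 hw j, hgw, rfl⟩

lemma inv_act (hD : D.IsAmpleGroupoid) {g : G} {x : C.nerveSSG.X n}
    (hg : D.source g = C.nerveSSG.anchor n x) :
    C.nerveSSG.act n (D.inv g) (C.nerveSSG.act n g x) = x := by
  refine Subtype.ext (funext fun j => ?_)
  rw [nerveAct_apply hD ((hD.source_inv g).trans (anchor_act hD hg).symm), nerveAct_apply hD hg]
  obtain ⟨p, rfl⟩ := surjective_simplex hD x
  rw [anchor_simplex] at hg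
  refine Prod.ext ?_ rfl
  change trans (D.inv g) (trans g (C.fib _ p.1.2)) = C.fib _ p.1.2
  rw [trans_fib hD hg, trans_fib hD ((hD.source_inv g).trans (hD.range_mul _ _ hg).symm),
    hD.inv_mul_cancel_left hg]

/-- The simplex whose `j`-th entry is entry `σ j` of a given one. -/
def reindex (σ : Fin (m + 1) → Fin (n + 1)) (x : C.nerveSSG.X n) : C.nerveSSG.X m :=
  ⟨x.1 ∘ σ, fun j => x.2.1 (σ j), x.2.2.mono (iInter_mono' fun j => ⟨σ j, le_rfl⟩)⟩

lemma anchor_reindex (hD : D.IsAmpleGroupoid) (σ : Fin (m + 1) → Fin (n + 1)) (x : C.nerveSSG.X n) :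
    C.nerveSSG.anchor m (reindex σ x) = C.nerveSSG.anchor n x := by
  obtain ⟨w, hw⟩ := x.2.2
  rw [anchor_eq_range hD hw]
  exact anchor_eq_range hD (mem_iInter.2 fun j => mem_iInter.1 hw (σ j))

lemma reindex_eq_reindex (hD : D.IsAmpleGroupoid) {σ τ : Fin (m + 1) → Fin (n + 1)}
    {x : C.nerveSSG.X n} (h : colour x ∘ σ = colour x ∘ τ) : reindex σ x = reindex τ x :=
  Subtype.ext (funext fun j => apply_eq_apply_of_colour_eq hD (congrFun h j))

lemma isGMap_reindex (hD : D.IsAmpleGroupoid) (σ : Fin (m + 1) → Fin (n + 1)) :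
    IsGMap C.nerveSSG C.nerveSSG (reindex (C := C) σ) where
  continuous := by
    let := C.baseTop
    exact continuous_induced_rng.2 (continuous_pi fun j =>
      (continuous_apply (σ j)).comp continuous_induced_dom)
  anchor_comm := anchor_reindex hD σ
  act_comm g x hg := Subtype.ext <| funext fun j =>
    (nerveAct_apply hD hg (σ j)).trans
      (nerveAct_apply hD (hg.trans (anchor_reindex hD σ x).symm) j).symm

lemma isEtale_nerveSSG (hD : D.IsAmpleGroupoid) (C : D.Colouring d) : C.nerveSSG.IsEtale where
  t2 := t2Space_nerveSp hD
  etale_anchor := isLocalHomeomorph_anchor hD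
  anchor_face _ i := anchor_reindex hD i.succAbove
  anchor_act _ _ _ := anchor_act hD
  inv_act _ _ _ := inv_act hD

end GroupoidData.Colouring

/-! ### Operators on chains of the nerve induced by local operators on colour tuples -/

namespace GroupoidData.Colouring

open Finsupp SSG TupleChain fiberwiseFinite

variable {G : Type u} [TopologicalSpace G] {D : GroupoidData G} {d n m l : ℕ} {C : D.Colouring d}

lemma comp_sum {ι M N P : Type*} [AddZeroClass M] [AddCommMonoid N] [AddCommMonoid P]
    (f : N →+ P) (g : ι → M →+ N) (s : Finset ι) : f.comp (∑ i ∈ s, g i) = ∑ i ∈ s, f.comp (g i) :=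
  map_sum (AddMonoidHom.compHom f) g s

lemma sum_comp {ι M N P : Type*} [AddZeroClass M] [AddCommMonoid N] [AddCommMonoid P]
    (g : ι → N →+ P) (s : Finset ι) (f : M →+ N) :
    (∑ i ∈ s, g i).comp f = ∑ i ∈ s, (g i).comp f :=
  map_sum (AddMonoidHom.compHom.flip f) g s

/-- The projection of the chains of the nerve onto those supported on the simplices with
colours `c`. -/
def colourPart (c : Fin (n + 1) → Fin (d + 1)) : C.nerveSSG.Chain n →+ C.nerveSSG.Chain n :=
  restrictTo (C.nerveSSG.anchor n) (colour ⁻¹' {c})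

lemma restrictTo_comp_colourPart_of_mem {A : Set (Fin (n + 1) → Fin (d + 1))}
    {c : Fin (n + 1) → Fin (d + 1)} (hc : c ∈ A) :
    (restrictTo (C.nerveSSG.anchor n) (colour ⁻¹' A)).comp (colourPart c) = colourPart c := by
  rw [colourPart, restrictTo_comp_restrictTo, ← preimage_inter,
    inter_eq_right.2 (singleton_subset_iff.2 hc)]

lemma restrictTo_comp_colourPart_of_notMem {A : Set (Fin (n + 1) → Fin (d + 1))}
    {c : Fin (n + 1) → Fin (d + 1)} (hc : c ∉ A) :
    (restrictTo (C.nerveSSG.anchor n) (colour ⁻¹' A)).comp (colourPart c) = 0 := by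
  rw [colourPart, restrictTo_comp_restrictTo, ← preimage_inter, inter_singleton_eq_empty.2 hc,
    preimage_empty]
  exact AddMonoidHom.ext fun a => Subtype.ext (Set.indicator_empty a.1)

lemma colourPart_comp_colourPart_self (c : Fin (n + 1) → Fin (d + 1)) :
    (colourPart c).comp (colourPart c) = colourPart (C := C) c :=
  restrictTo_comp_colourPart_of_mem (mem_singleton c)

lemma colourPart_comp_colourPart_of_ne {c e : Fin (n + 1) → Fin (d + 1)} (hce : c ≠ e) :
    (colourPart (C := C) c).comp (colourPart e) = 0 :=
  restrictTo_comp_colourPart_of_notMem (A := {c}) hce.symm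

lemma sum_colourPart : ∑ c, colourPart c = AddMonoidHom.id (C.nerveSSG.Chain n) := by
  refine AddMonoidHom.ext fun a => Subtype.ext <| funext fun x => ?_
  rw [AddMonoidHom.finsetSum_apply, AddSubgroup.val_finsetSum, Finset.sum_apply,
    Finset.sum_eq_single_of_mem (colour x) (Finset.mem_univ _) fun c _ hc => ?_]
  · exact Set.indicator_of_mem (show x ∈ colour ⁻¹' {colour x} from rfl) a.1
  · exact Set.indicator_of_notMem (fun hx => hc hx.symm) a.1

lemma colourPart_mem_admissible (hD : D.IsAmpleGroupoid) (c : Fin (n + 1) → Fin (d + 1)) :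
    colourPart c ∈ admissible C.nerveSSG C.nerveSSG n n :=
  restrictTo_mem_admissible hD (isEtale_nerveSSG hD C)
    ((isClopen_discrete {c}).preimage (continuous_colour hD)) fun g x hg => by
      rw [mem_preimage, colour_act hD hg, mem_preimage]

/-- The pushforward along `reindex σ`. -/
def pushReindex (hD : D.IsAmpleGroupoid) (σ : Fin (m + 1) → Fin (n + 1)) :
    C.nerveSSG.Chain n →+ C.nerveSSG.Chain m :=
  push (reindex σ) (anchor_reindex hD σ)

lemma pushReindex_comp_pushReindex (hD : D.IsAmpleGroupoid) (σ : Fin (m + 1) → Fin (n + 1))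
    (τ : Fin (l + 1) → Fin (m + 1)) :
    (pushReindex hD τ).comp (pushReindex hD σ) = pushReindex (C := C) hD (σ ∘ τ) :=
  push_comp_push (anchor_reindex hD σ) (anchor_reindex hD τ)

lemma colourPart_comp_pushReindex (hD : D.IsAmpleGroupoid) (σ : Fin (m + 1) → Fin (n + 1))
    (c : Fin (n + 1) → Fin (d + 1)) :
    (colourPart (c ∘ σ)).comp ((pushReindex hD σ).comp (colourPart c)) =
      (pushReindex (C := C) hD σ).comp (colourPart c) := by
  rw [← AddMonoidHom.comp_assoc, colourPart, pushReindex, restrictTo_comp_push,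
    AddMonoidHom.comp_assoc]
  exact congrArg _ (restrictTo_comp_colourPart_of_mem (A := {c' | c' ∘ σ = c ∘ σ}) rfl)

/-- The operator sending a simplex with colours `c` to the one with colours `c'` formed from its
entries, if there is one; simplices with other colours are sent to zero. -/
def colourChange (hD : D.IsAmpleGroupoid) (c : Fin (n + 1) → Fin (d + 1))
    (c' : Fin (m + 1) → Fin (d + 1)) : C.nerveSSG.Chain n →+ C.nerveSSG.Chain m :=
  if h : ∃ σ : Fin (m + 1) → Fin (n + 1), c ∘ σ = c' then
    (pushReindex hD h.choose).comp (colourPart c)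
  else 0

lemma colourChange_comp (hD : D.IsAmpleGroupoid) (c : Fin (n + 1) → Fin (d + 1))
    (σ : Fin (m + 1) → Fin (n + 1)) :
    colourChange hD c (c ∘ σ) = (pushReindex (C := C) hD σ).comp (colourPart c) := by
  have h : ∃ τ : Fin (m + 1) → Fin (n + 1), c ∘ τ = c ∘ σ := ⟨σ, rfl⟩
  rw [colourChange, dif_pos h]
  refine push_comp_restrictTo_congr _ _ fun x hx => reindex_eq_reindex hD ?_
  rw [show colour x = c from hx, h.choose_spec]

lemma colourChange_mem_admissible (hD : D.IsAmpleGroupoid) (c : Fin (n + 1) → Fin (d + 1))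
    (c' : Fin (m + 1) → Fin (d + 1)) :
    colourChange hD c c' ∈ admissible C.nerveSSG C.nerveSSG n m := by
  have hC := isEtale_nerveSSG hD C
  rw [colourChange]
  split_ifs
  · exact comp_mem_admissible (push_mem_admissible hD hC hC (isGMap_reindex hD _))
      (colourPart_mem_admissible hD c)
  · exact zero_mem _

/-- The linear extension of `colourChange hD c` to chains of colour tuples. -/
def chainChange (hD : D.IsAmpleGroupoid) (c : Fin (n + 1) → Fin (d + 1)) :
    TupleChain (Fin (d + 1)) (m + 1) →ₗ[ℤ] (C.nerveSSG.Chain n →+ C.nerveSSG.Chain m) :=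
  linearCombination ℤ (colourChange hD c)

lemma chainChange_single (hD : D.IsAmpleGroupoid) (c : Fin (n + 1) → Fin (d + 1))
    (c' : Fin (m + 1) → Fin (d + 1)) :
    chainChange hD c (single c' 1) = colourChange (C := C) hD c c' := by
  rw [chainChange, linearCombination_single, one_smul]

/-- The operator on chains of the nerve which on simplices with colours `c` is given by the chain
`K c` of colour tuples. -/
def operator (hD : D.IsAmpleGroupoid) :
    (TupleChain (Fin (d + 1)) (n + 1) →ₗ[ℤ] TupleChain (Fin (d + 1)) (m + 1)) →ₗ[ℤ]
      (C.nerveSSG.Chain n →+ C.nerveSSG.Chain m) :=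
  ∑ c, chainChange hD c ∘ₗ LinearMap.applyₗ (single c 1)

lemma operator_apply (hD : D.IsAmpleGroupoid)
    (K : TupleChain (Fin (d + 1)) (n + 1) →ₗ[ℤ] TupleChain (Fin (d + 1)) (m + 1)) :
    operator (C := C) hD K = ∑ c, chainChange hD c (K (single c 1)) := by
  simp only [operator, LinearMap.sum_apply, LinearMap.comp_apply, LinearMap.applyₗ_apply_apply]

lemma operator_mem_admissible (hD : D.IsAmpleGroupoid)
    (K : TupleChain (Fin (d + 1)) (n + 1) →ₗ[ℤ] TupleChain (Fin (d + 1)) (m + 1)) :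
    operator hD K ∈ admissible C.nerveSSG C.nerveSSG n m := by
  rw [operator_apply]
  refine sum_mem fun c _ => map_mem_of_mem_supported (A := univ)
    (N := (admissible C.nerveSSG C.nerveSSG n m).toIntSubmodule) (fun c' _ => ?_) (by simp)
  rw [chainChange_single]
  exact colourChange_mem_admissible hD c c'

lemma chainChange_comp_eq (hD : D.IsAmpleGroupoid) {e : Fin (m + 1) → Fin (d + 1)}
    {L : C.nerveSSG.Chain n →+ C.nerveSSG.Chain m} {A : Set (Fin (l + 1) → Fin (d + 1))}
    {F : TupleChain (Fin (d + 1)) (l + 1) →ₗ[ℤ] (C.nerveSSG.Chain n →+ C.nerveSSG.Chain l)}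
    (h : ∀ c ∈ A, (colourChange hD e c).comp L = F (single c 1))
    {z : TupleChain (Fin (d + 1)) (l + 1)} (hz : z ∈ supported ℤ ℤ A) :
    (chainChange hD e z).comp L = F z := by
  refine sub_eq_zero.1 (map_mem_of_mem_supported (N := ⊥)
    (f := (AddMonoidHom.compHom.flip L).toIntLinearMap ∘ₗ chainChange hD e - F)
    (fun c hc => sub_eq_zero.2 ?_) hz)
  exact (congrArg (AddMonoidHom.comp · L) (chainChange_single hD e c)).trans (h c hc)

lemma colourChange_comp_colourPart_self (hD : D.IsAmpleGroupoid) (c : Fin (n + 1) → Fin (d + 1))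
    (c' : Fin (m + 1) → Fin (d + 1)) :
    (colourChange hD c c').comp (colourPart c) = colourChange (C := C) hD c c' := by
  rw [colourChange]
  split_ifs
  · rw [AddMonoidHom.comp_assoc, colourPart_comp_colourPart_self]
  · rfl

lemma colourChange_comp_colourPart_of_ne (hD : D.IsAmpleGroupoid)
    {c e : Fin (n + 1) → Fin (d + 1)} (hce : c ≠ e) (c' : Fin (m + 1) → Fin (d + 1)) :
    (colourChange (C := C) hD c c').comp (colourPart e) = 0 := by
  rw [colourChange]
  split_ifs
  · rw [AddMonoidHom.comp_assoc, colourPart_comp_colourPart_of_ne hce, AddMonoidHom.comp_zero]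
  · rfl

lemma colourChange_comp_colourChange (hD : D.IsAmpleGroupoid) (c : Fin (n + 1) → Fin (d + 1))
    (σ : Fin (m + 1) → Fin (n + 1)) (τ : Fin (l + 1) → Fin (m + 1)) :
    (colourChange hD (c ∘ σ) (c ∘ σ ∘ τ)).comp (colourChange hD c (c ∘ σ)) =
      colourChange (C := C) hD c (c ∘ σ ∘ τ) := by
  rw [colourChange_comp hD c σ, colourChange_comp hD c (σ ∘ τ), ← comp_assoc c,
    colourChange_comp hD (c ∘ σ) τ, AddMonoidHom.comp_assoc, colourPart_comp_pushReindex,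
    ← AddMonoidHom.comp_assoc, pushReindex_comp_pushReindex]

lemma operator_comp_colourPart (hD : D.IsAmpleGroupoid)
    (K : TupleChain (Fin (d + 1)) (n + 1) →ₗ[ℤ] TupleChain (Fin (d + 1)) (m + 1))
    (c : Fin (n + 1) → Fin (d + 1)) :
    (operator hD K).comp (colourPart c) = chainChange (C := C) hD c (K (single c 1)) := by
  rw [operator_apply, sum_comp, Finset.sum_eq_single_of_mem c (Finset.mem_univ c) fun e _ he => ?_]
  · exact chainChange_comp_eq (A := univ) hD (fun c' _ => by
      rw [colourChange_comp_colourPart_self, chainChange_single]) (by simp)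
  · exact chainChange_comp_eq (F := 0) (A := univ) hD
      (fun c' _ => colourChange_comp_colourPart_of_ne hD he c') (by simp)

lemma operator_comp_colourChange (hD : D.IsAmpleGroupoid)
    {K : TupleChain (Fin (d + 1)) (m + 1) →ₗ[ℤ] TupleChain (Fin (d + 1)) (l + 1)}
    (hK : IsLocal K) (c : Fin (n + 1) → Fin (d + 1)) (σ : Fin (m + 1) → Fin (n + 1)) :
    (operator hD K).comp (colourChange hD c (c ∘ σ)) =
      chainChange (C := C) hD c (K (single (c ∘ σ) 1)) := by
  have hcolour : (colourPart (c ∘ σ)).comp (colourChange hD c (c ∘ σ)) =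
      colourChange (C := C) hD c (c ∘ σ) := by
    rw [colourChange_comp, colourPart_comp_pushReindex]
  rw [← hcolour, ← AddMonoidHom.comp_assoc, operator_comp_colourPart]
  refine chainChange_comp_eq hD (fun c' hc' => ?_)
    (hK (Set.range (c ∘ σ)) _ (single_mem_chainsIn mem_range_self 1))
  choose τ hτ using hc'
  obtain rfl : c ∘ σ ∘ τ = c' := funext hτ
  rw [colourChange_comp_colourChange, chainChange_single]

lemma operator_comp_chainChange (hD : D.IsAmpleGroupoid)
    {K : TupleChain (Fin (d + 1)) (m + 1) →ₗ[ℤ] TupleChain (Fin (d + 1)) (l + 1)}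
    (hK : IsLocal K) {c : Fin (n + 1) → Fin (d + 1)} {z : TupleChain (Fin (d + 1)) (m + 1)}
    (hz : z ∈ chainsIn (Set.range c) (m + 1)) :
    (operator hD K).comp (chainChange hD c z) = chainChange (C := C) hD c (K z) := by
  refine sub_eq_zero.1 (map_mem_of_mem_supported (N := ⊥)
    (f := (AddMonoidHom.compHom (operator hD K)).toIntLinearMap ∘ₗ chainChange hD c -
      chainChange hD c ∘ₗ K) (fun c' hc' => sub_eq_zero.2 ?_) hz)
  choose σ hσ using hc'
  obtain rfl : c ∘ σ = c' := funext hσ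
  exact (congrArg _ (chainChange_single hD c _)).trans (operator_comp_colourChange hD hK c σ)

lemma operator_comp_operator (hD : D.IsAmpleGroupoid)
    {K : TupleChain (Fin (d + 1)) (m + 1) →ₗ[ℤ] TupleChain (Fin (d + 1)) (l + 1)}
    {L : TupleChain (Fin (d + 1)) (n + 1) →ₗ[ℤ] TupleChain (Fin (d + 1)) (m + 1)}
    (hK : IsLocal K) (hL : IsLocal L) :
    (operator hD K).comp (operator hD L) = operator (C := C) hD (K ∘ₗ L) := by
  have hlocal (c : Fin (n + 1) → Fin (d + 1)) :
      L (single c 1) ∈ chainsIn (Set.range c) (m + 1) :=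
    hL _ _ (single_mem_chainsIn mem_range_self 1)
  rw [operator_apply hD L, operator_apply hD (K ∘ₗ L), comp_sum]
  exact Finset.sum_congr rfl fun c _ => operator_comp_chainChange hD hK (hlocal c)

lemma operator_lmapDomain (hD : D.IsAmpleGroupoid) (σ : Fin (m + 1) → Fin (n + 1)) :
    operator hD (lmapDomain ℤ ℤ fun c => c ∘ σ) = pushReindex (C := C) hD σ := by
  have hterm (c : Fin (n + 1) → Fin (d + 1)) :
      chainChange hD c (lmapDomain ℤ ℤ (fun c => c ∘ σ) (single c 1)) =
        (pushReindex (C := C) hD σ).comp (colourPart c) := by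
    rw [lmapDomain_apply, mapDomain_single, chainChange_single, colourChange_comp]
  rw [operator_apply, Finset.sum_congr rfl fun c _ => hterm c, ← comp_sum,
    sum_colourPart, AddMonoidHom.comp_id]

lemma operator_id (hD : D.IsAmpleGroupoid) :
    operator hD .id = AddMonoidHom.id (C.nerveSSG.Chain n) := by
  have hid : LinearMap.id = lmapDomain ℤ ℤ fun c : Fin (n + 1) → Fin (d + 1) => c ∘ id :=
    (lmapDomain_id ℤ ℤ).symm
  rw [hid, operator_lmapDomain]
  exact push_id

lemma operator_boundary (hD : D.IsAmpleGroupoid) (n : ℕ) :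
    operator hD (TupleChain.boundary (n + 1)) = SSG.boundary (isEtale_nerveSSG hD C) n := by
  simp only [boundary_eq_sum, map_sum, map_smul, operator_lmapDomain]
  rfl

lemma operator_increasingPart (hD : D.IsAmpleGroupoid) (n : ℕ) :
    operator hD (increasingPart (n + 1)) =
      restrictTo (C.nerveSSG.anchor n) (colour ⁻¹' {c | StrictMono c}) := by
  have hterm (c : Fin (n + 1) → Fin (d + 1)) :
      chainChange hD c (increasingPart (n + 1) (single c 1)) =
        (restrictTo (C.nerveSSG.anchor n) (colour ⁻¹' {c | StrictMono c})).comp (colourPart c) := by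
    rw [increasingPart_single]
    split_ifs with hc
    · rw [restrictTo_comp_colourPart_of_mem (A := {c | StrictMono c}) hc, chainChange_single]
      exact (colourChange_comp hD c id).trans (congrArg (AddMonoidHom.comp · _) push_id)
    · rw [map_zero, restrictTo_comp_colourPart_of_notMem (A := {c | StrictMono c}) hc]
  rw [operator_apply, Finset.sum_congr rfl fun c _ => hterm c, ← comp_sum,
    sum_colourPart, AddMonoidHom.comp_id]

end GroupoidData.Colouring

/-! ### The part of the nerve with increasing colours -/

namespace GroupoidData

open SSG

variable {G : Type u} [TopologicalSpace G] {D : GroupoidData G}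

lemma SSG.IsEtale.of_isOpenEmbedding {S T : D.SSG} (hD : D.IsAmpleGroupoid) (hT : T.IsEtale)
    {φ : ∀ n, S.X n → T.X n} (hφ : ∀ n, IsGMap S T (φ n))
    (hemb : ∀ n, Topology.IsOpenEmbedding (φ n))
    (hface : ∀ n i x, φ n (S.face n i x) = T.face n i (φ (n + 1) x)) : S.IsEtale := by
  have hanchor (n : ℕ) : T.anchor n ∘ φ n = S.anchor n := funext (hφ n).anchor_comm
  have hsource {n : ℕ} {g : G} {x : S.X n} (hg : D.source g = S.anchor n x) :
      D.source g = T.anchor n (φ n x) := hg.trans ((hφ n).anchor_comm x).symm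
  have hanchor_act (n : ℕ) (g : G) (x : S.X n) (hg : D.source g = S.anchor n x) :
      S.anchor n (S.act n g x) = D.range g := by
    rw [← (hφ n).anchor_comm, (hφ n).act_comm g x hg, hT.anchor_act n g _ (hsource hg)]
  refine ⟨fun n => ?_, fun n => ?_, fun n i x => ?_, hanchor_act, fun n g x hg => ?_⟩
  · have := hT.t2 n
    exact (hemb n).isEmbedding.t2Space
  · exact hanchor n ▸ (hT.etale_anchor n).comp (hemb n).isLocalHomeomorph
  · rw [← (hφ n).anchor_comm, hface, hT.anchor_face, (hφ (n + 1)).anchor_comm]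
  · refine (hemb n).injective ?_
    rw [(hφ n).act_comm _ _ ((hD.source_inv g).trans (hanchor_act n g x hg).symm),
      (hφ n).act_comm g x hg, hT.inv_act n g _ (hsource hg)]

namespace Colouring

open TupleChain fiberwiseFinite

variable {d : ℕ} {C : D.Colouring d}

/-- The inclusion `N_n^> → N_n` as a map between the spaces of semi-simplicial `G`-spaces. -/
abbrev incl (C : D.Colouring d) (n : ℕ) : C.nerveGtSSG.X n → C.nerveSSG.X n := C.nerveIncl n

lemma range_incl (n : ℕ) :
    Set.range (C.incl n) = colour ⁻¹' {c | StrictMono c} :=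
  Set.ext fun x => ⟨by rintro ⟨y, rfl⟩; exact fun j k => y.2.2 j k,
    fun hx => ⟨⟨x.1, x.2, fun _ _ hjk => hx hjk⟩, rfl⟩⟩

lemma isClopen_range_incl (hD : D.IsAmpleGroupoid) (n : ℕ) :
    IsClopen (Set.range (C.incl n)) :=
  range_incl (C := C) n ▸ (isClopen_discrete _).preimage (continuous_colour hD)

lemma isEmbedding_incl (n : ℕ) : Topology.IsEmbedding (C.incl n) := by
  let := C.baseTop
  refine .of_comp ?_ continuous_induced_dom Topology.IsEmbedding.subtypeVal
  exact continuous_induced_rng.2 continuous_induced_dom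

lemma isGMap_incl (hD : D.IsAmpleGroupoid) (n : ℕ) :
    IsGMap C.nerveGtSSG C.nerveSSG (C.incl n) where
  continuous := (isEmbedding_incl n).continuous
  anchor_comm x := anchor_eq_range hD x.2.1.2.some_mem
  act_comm g x hg := by
    have hg : D.source g = C.nerveSSG.anchor n (C.incl n x) :=
      hg.trans (anchor_eq_range hD x.2.1.2.some_mem).symm
    refine Subtype.ext (funext fun j => Eq.trans ?_ (nerveAct_apply hD hg j).symm)
    exact congrFun (congrArg Subtype.val
      (dif_pos (c := _ ∈ C.nerveGtSet n) ⟨trans_mem_nerveSet hD hg, x.2.2⟩)) j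

lemma isEtale_nerveGtSSG (hD : D.IsAmpleGroupoid) (C : D.Colouring d) : C.nerveGtSSG.IsEtale :=
  .of_isOpenEmbedding hD (isEtale_nerveSSG hD C) (isGMap_incl hD)
    (fun n => ⟨isEmbedding_incl n, (isClopen_range_incl hD n).isOpen⟩) fun _ _ _ => rfl

/-- The inclusion of the chains of `N_n^>` into those of `N_n`. -/
def inclusion (hD : D.IsAmpleGroupoid) (C : D.Colouring d) (n : ℕ) :
    C.nerveGtSSG.Chain n →+ C.nerveSSG.Chain n :=
  push (C.incl n) (isGMap_incl hD n).anchor_comm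

/-- The restriction of chains of `N_n` to `N_n^>`. -/
def restriction (hD : D.IsAmpleGroupoid) (C : D.Colouring d) (n : ℕ) :
    C.nerveSSG.Chain n →+ C.nerveGtSSG.Chain n :=
  pull (C.incl n) (isGMap_incl hD n).anchor_comm (isEmbedding_incl n).injective

/-- The retraction of the chains of `N_n` onto those of `N_n^>` which sorts the colours. -/
def retraction (hD : D.IsAmpleGroupoid) (C : D.Colouring d) (n : ℕ) :
    C.nerveSSG.Chain n →+ C.nerveGtSSG.Chain n :=
  (restriction hD C n).comp (operator hD (sorting (n + 1)))

lemma restriction_comp_inclusion (hD : D.IsAmpleGroupoid) (n : ℕ) :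
    (restriction hD C n).comp (inclusion hD C n) = .id _ :=
  pull_comp_push _ _

lemma inclusion_comp_restriction (hD : D.IsAmpleGroupoid) (n : ℕ) :
    (inclusion hD C n).comp (restriction hD C n) = operator hD (increasingPart (n + 1)) := by
  rw [operator_increasingPart, ← range_incl]
  exact push_comp_pull _ _

lemma inclusion_comp_retraction (hD : D.IsAmpleGroupoid) (n : ℕ) :
    (inclusion hD C n).comp (retraction hD C n) = operator hD (sorting (n + 1)) := by
  rw [retraction, ← AddMonoidHom.comp_assoc, inclusion_comp_restriction,
    operator_comp_operator hD (isLocal_increasingPart _) (isLocal_sorting _),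
    increasingPart_comp_sorting]

lemma sorting_comp_inclusion (hD : D.IsAmpleGroupoid) (n : ℕ) :
    (operator hD (sorting (n + 1))).comp (inclusion hD C n) = inclusion hD C n := by
  have hincl : (operator hD (increasingPart (n + 1))).comp (inclusion hD C n) =
      inclusion hD C n := by
    rw [← inclusion_comp_restriction, AddMonoidHom.comp_assoc, restriction_comp_inclusion,
      AddMonoidHom.comp_id]
  rw [← hincl, ← AddMonoidHom.comp_assoc,
    operator_comp_operator hD (isLocal_sorting _) (isLocal_increasingPart _),
    sorting_comp_increasingPart]

lemma retraction_comp_inclusion (hD : D.IsAmpleGroupoid) (n : ℕ) :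
    (retraction hD C n).comp (inclusion hD C n) = .id _ := by
  rw [retraction, AddMonoidHom.comp_assoc, sorting_comp_inclusion, restriction_comp_inclusion]

lemma boundary_comp_inclusion (hD : D.IsAmpleGroupoid) (n : ℕ) :
    (SSG.boundary (isEtale_nerveSSG hD C) n).comp (inclusion hD C (n + 1)) =
      (inclusion hD C n).comp (SSG.boundary (isEtale_nerveGtSSG hD C) n) := by
  have hface (i : Fin (n + 2)) :
      (push (C.nerveSSG.face n i) ((isEtale_nerveSSG hD C).anchor_face n i)).comp
          (inclusion hD C (n + 1)) =
        (inclusion hD C n).comp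
          (push (C.nerveGtSSG.face n i) ((isEtale_nerveGtSSG hD C).anchor_face n i)) :=
    (push_comp_push _ _).trans
      (push_comp_push ((isEtale_nerveGtSSG hD C).anchor_face n i)
        (isGMap_incl hD n).anchor_comm).symm
  rw [SSG.boundary, SSG.boundary, sum_comp, comp_sum]
  exact Finset.sum_congr rfl fun i _ => (congrArg ((-1 : ℤ) ^ (i : ℕ) • ·) (hface i)).trans
    (map_zsmul (AddMonoidHom.compHom (inclusion hD C n)) _ _).symm

lemma boundary_comp_sorting (hD : D.IsAmpleGroupoid) (n : ℕ) :
    (SSG.boundary (isEtale_nerveSSG hD C) n).comp (operator hD (sorting (n + 2))) =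
      (operator hD (sorting (n + 1))).comp (SSG.boundary (isEtale_nerveSSG hD C) n) := by
  rw [← operator_boundary hD, operator_comp_operator hD (isLocal_boundary _) (isLocal_sorting _),
    operator_comp_operator hD (isLocal_sorting _) (isLocal_boundary _)]
  exact congrArg _ (LinearMap.ext boundary_sorting)

lemma isChainMap_inclusion (hD : D.IsAmpleGroupoid) (C : D.Colouring d) :
    IsChainMap (isEtale_nerveGtSSG hD C) (isEtale_nerveSSG hD C) (inclusion hD C) where
  mem_admissible n := push_mem_admissible hD (isEtale_nerveGtSSG hD C) (isEtale_nerveSSG hD C)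
    (isGMap_incl hD n)
  boundary_comm n := DFunLike.congr_fun (boundary_comp_inclusion hD n)

lemma boundary_comp_retraction (hD : D.IsAmpleGroupoid) (n : ℕ) :
    (SSG.boundary (isEtale_nerveGtSSG hD C) n).comp (retraction hD C (n + 1)) =
      (retraction hD C n).comp (SSG.boundary (isEtale_nerveSSG hD C) n) := by
  have hinj : Injective (inclusion hD C n) :=
    LeftInverse.injective (g := restriction hD C n)
      (DFunLike.congr_fun (restriction_comp_inclusion hD n))
  rw [← AddMonoidHom.cancel_left hinj, ← AddMonoidHom.comp_assoc, ← boundary_comp_inclusion hD,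
    AddMonoidHom.comp_assoc, inclusion_comp_retraction, boundary_comp_sorting,
    ← AddMonoidHom.comp_assoc, inclusion_comp_retraction]

lemma isChainMap_retraction (hD : D.IsAmpleGroupoid) (C : D.Colouring d) :
    IsChainMap (isEtale_nerveSSG hD C) (isEtale_nerveGtSSG hD C) (retraction hD C) where
  mem_admissible n := comp_mem_admissible
    (pull_mem_admissible hD (isEtale_nerveSSG hD C) (isGMap_incl hD n)
      ⟨isEmbedding_incl n, (isClopen_range_incl hD n).isClosed⟩)
    (operator_mem_admissible hD _)
  boundary_comm n := DFunLike.congr_fun (boundary_comp_retraction hD n)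

lemma sub_inclusion_retraction_mem_bdries (hD : D.IsAmpleGroupoid) (n : ℕ)
    (b : C.nerveSSG.Chain n) (hb : (b : C.nerveSSG.X n → ℤ) ∈ C.nerveSSG.cycles n) :
    (b - inclusion hD C n (retraction hD C n b) : C.nerveSSG.X n → ℤ) ∈ C.nerveSSG.bdries n := by
  have hhomotopy (n : ℕ) : .id - sorting (n + 1) = TupleChain.boundary (n + 1) ∘ₗ
      sortingHomotopy (n + 1) + sortingHomotopy n ∘ₗ TupleChain.boundary n (κ := Fin (d + 1)) :=
    LinearMap.ext fun z => (sub_eq_iff_eq_add.1 (boundary_sortingHomotopy n z).symm)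
  have hoperator (n : ℕ) : .id _ - (inclusion hD C n).comp (retraction hD C n) =
      (SSG.boundary (isEtale_nerveSSG hD C) n).comp (operator hD (sortingHomotopy (n + 1))) +
        operator hD (sortingHomotopy n ∘ₗ TupleChain.boundary n) := by
    rw [inclusion_comp_retraction, ← operator_id hD, ← map_sub, hhomotopy, map_add,
      ← operator_boundary hD, operator_comp_operator hD (isLocal_boundary _)
        (isLocal_sortingHomotopy _)]
  refine sub_mem_bdries_of_homotopy (K := fun n => (inclusion hD C n).comp (retraction hD C n))
    hD (isEtale_nerveSSG hD C) (h := fun n => operator hD (sortingHomotopy (n + 1)))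
    (fun n => operator_mem_admissible hD _) (fun a => ?_) (fun n a => ?_) hb
  · have hzero : operator hD (sortingHomotopy 0 ∘ₗ TupleChain.boundary 0) =
      (0 : C.nerveSSG.Chain 0 →+ C.nerveSSG.Chain 0) := map_zero _
    exact (DFunLike.congr_fun ((hoperator 0).trans (by rw [hzero, add_zero])) a :)
  · have hsucc := hoperator (n + 1)
    rw [← operator_comp_operator hD (isLocal_sortingHomotopy _) (isLocal_boundary _),
      operator_boundary] at hsucc
    exact DFunLike.congr_fun hsucc a

/-- The isomorphism `H_n^G(N^>) ≅ H_n(𝒞)` induced by the inclusion. -/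
def homologyEquiv (hD : D.IsAmpleGroupoid) (C : D.Colouring d) (n : ℕ) :
    C.nerveGtSSG.homology n ≃+ C.homology n :=
  homologyEquivOfRetraction hD (isChainMap_inclusion hD C) (isChainMap_retraction hD C)
    (fun n => DFunLike.congr_fun (retraction_comp_inclusion hD n))
    (sub_inclusion_retraction_mem_bdries hD) n

lemma exists_homologyEquiv_cls_eq (hD : D.IsAmpleGroupoid) {n : ℕ} {a : C.nerveGtSSG.X n → ℤ}
    (ha : a ∈ C.nerveGtSSG.cycles n) :
    ∃ hb : pushf (C.nerveIncl n) a ∈ C.nerveSSG.cycles n,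
      homologyEquiv hD C n (C.nerveGtSSG.cls a ha) =
        C.nerveSSG.cls (pushf (C.nerveIncl n) a) hb := by
  have hι := isChainMap_inclusion hD C
  lift a to C.nerveGtSSG.Chain n using
    ccZ_le_chain hD (isEtale_nerveGtSSG hD C) n (cycles_le_ccZ n ha)
  exact ⟨hι.map_mem_cycles hD ha, hι.homologyMap_cls hD ha⟩

lemma isEmpty_nerveGtSp {n : ℕ} (hn : d < n) : IsEmpty (C.NerveGtSp n) := by
  refine ⟨fun x => ?_⟩
  have hcard := Fintype.card_le_of_injective _
    (StrictMono.injective (f := fun j => (x.1 j).2) fun j k => x.2.2 j k)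
  simp only [Fintype.card_fin] at hcard
  omega

lemma subsingleton_nerveGtSSG_homology {n : ℕ} (hn : d < n) :
    Subsingleton (C.nerveGtSSG.homology n) := by
  have : IsEmpty (C.nerveGtSSG.X n) := isEmpty_nerveGtSp hn
  exact (QuotientAddGroup.mk_surjective (s := _)).subsingleton

lemma subsingleton_homology (hD : D.IsAmpleGroupoid) {n : ℕ} (hn : d < n) :
    Subsingleton (C.homology n) :=
  have := subsingleton_nerveGtSSG_homology (C := C) hn
  (homologyEquiv hD C n).symm.subsingleton

end Colouring

end GroupoidData

/-- Let `G` be an ample groupoid with compact unit space and let `𝒞 = (G_0, …, G_d)` be a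
colouring of `G` with nerve `N_*`.  Then the canonical inclusion `N_*^> → N_*` induces an
isomorphism `H_*(𝒞) ≅ H_*^G(N_*^>)`; in particular, since `N_n^>` is empty for `n > d`,
`H_n(𝒞) = 0` for all `n > d`. -/
theorem colouring_homology_eq_increasing_part
    {G : Type u} [TopologicalSpace G] (D : GroupoidData G)
    (hAmple : D.IsAmpleGroupoid) (hcpt : IsCompact D.unitSpace)
    (d : ℕ) (C : D.Colouring d) :
    (∀ n : ℕ, ∃ e : C.nerveGtSSG.homology n ≃+ C.homology n,
      ∀ (a : C.NerveGtSp n → ℤ) (ha : a ∈ C.nerveGtSSG.cycles n),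
        ∃ hb : pushf (C.nerveIncl n) a ∈ C.nerveSSG.cycles n,
          e (C.nerveGtSSG.cls a ha) = C.nerveSSG.cls (pushf (C.nerveIncl n) a) hb) ∧
    (∀ n : ℕ, d < n → ∀ x : C.homology n, x = 0) := by
  refine ⟨fun n => ⟨GroupoidData.Colouring.homologyEquiv hAmple C n, fun _ ha => ?_⟩,
    fun n hn x => ?_⟩
  · exact GroupoidData.Colouring.exists_homologyEquiv_cls_eq hAmple ha
  · have := GroupoidData.Colouring.subsingleton_homology (C := C) hAmple hn
    exact Subsingleton.elim x 0
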